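/- arXiv:math/0606213 — 7 statements merged into one kernel-verified Lean document; each statement's English description precedes it below -/
import Mathlib

section
/- For every Maaß cusp form φ for SL(2,ℤ) there exists a constant C > 0 such that |φ(x + iy)| ≤ C·(log y)^{1/2}·e^{−2πy} for all x ∈ ℝ and y > 2. (This is the exponential decay obtained by Bernstein's method of analytic continuation of φ to the crown domain.) -/
open scoped Interval

/-- A Maaß cusp form for `SL(2,ℤ)` with spectral parameter `lam`, regarded as a
function `φ : ℂ → ℂ` on the upper half-plane `{z : 0 < Im z}`:
smooth, `SL(2,ℤ)`-invariant, an eigenfunction of the hyperbolic Laplacian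
`Δ = -y²(∂ₓ² + ∂ᵧ²)` with eigenvalue `λ(1-λ)`, of moderate growth, and cuspidal. -/
def IsMaassCuspForm (lam : ℂ) (φ : ℂ → ℂ) : Prop :=
  ContDiffOn ℝ (⊤ : ℕ∞) φ {z : ℂ | 0 < z.im} ∧
  (∀ γ : Matrix.SpecialLinearGroup (Fin 2) ℤ, ∀ z : ℂ, 0 < z.im →
      φ (((γ.1 0 0 : ℂ) * z + (γ.1 0 1 : ℂ)) / ((γ.1 1 0 : ℂ) * z + (γ.1 1 1 : ℂ))) = φ z) ∧
  (∀ z : ℂ, 0 < z.im →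
      -(z.im : ℂ) ^ 2 * (iteratedDeriv 2 (fun s : ℝ => φ (z + (s : ℂ))) 0 +
        iteratedDeriv 2 (fun s : ℝ => φ (z + (s : ℂ) * Complex.I)) 0) =
      lam * (1 - lam) * φ z) ∧
  (∃ A C₀ : ℝ, 0 < A ∧ 0 < C₀ ∧ ∀ x y : ℝ, 1 < y →
      ‖φ ((x : ℂ) + (y : ℂ) * Complex.I)‖ ≤ C₀ * y ^ A) ∧
  (∀ z : ℂ, 0 < z.im → (∫ t in (0 : ℝ)..1, φ (z + (t : ℂ))) = 0)

/-!
Expand `φ` in a Fourier series in `x`. The constant term vanishes by cuspidality, and for `n ≠ 0`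
the `n`-th coefficient solves `u'' = (ω² - μ / y²) u` with `ω = 2π|n|`. For large `y` the functions
`exp (± (ω y + ‖μ‖ / (ω y)))` are supersolutions of the real equation `W'' = (ω² - ‖μ‖ / y²) W`, so
by the maximum principle a solution that is `o(exp (ω y))` is `O(exp (-ω y))`, with constants
uniform in `n`. Summing over `n ≠ 0` leaves `exp (-2πy)`, and on `y > 2` the factor `√(log y)` is
bounded below.
-/

section

open Filter Topology Set MeasureTheory
open Complex (I)
open UpperHalfPlane (upperHalfPlaneSet isOpen_upperHalfPlaneSet)
open scoped Laplacian Real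

lemma secondDeriv_nonpos_of_isLocalMax {g g' : ℝ → ℝ} {g'' x : ℝ}
    (hg : ∀ᶠ t in 𝓝 x, HasDerivAt g (g' t) t) (hg' : HasDerivAt g' g'' x)
    (hmax : IsLocalMax g x) : g'' ≤ 0 := by
  have deriv_eq : deriv g =ᶠ[𝓝 x] g' := hg.mono fun t ht ↦ ht.deriv
  have deriv_deriv_eq : deriv (deriv g) x = g'' := deriv_eq.deriv_eq.trans hg'.deriv
  by_contra! hpos
  have hmin : IsLocalMin g x := isLocalMin_of_deriv_deriv_pos (deriv_deriv_eq ▸ hpos)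
    hmax.deriv_eq_zero hg.self_of_nhds.continuousAt
  have hconst : g =ᶠ[𝓝 x] fun _ ↦ g x := by
    filter_upwards [hmax, hmin] with t hle hge using le_antisymm hle hge
  have : deriv (deriv g) x = 0 := by rw [hconst.deriv.deriv_eq]; simp
  linarith

/-- `W` is a nonnegative classical supersolution of `u'' = p u` on `s`, i.e. `W'' ≤ p W` there.
Supersolutions serve as barriers in the comparison principle. The derivatives are two-sided, also
at boundary points of `s`. -/
structure IsSupersolutionOn (p W : ℝ → ℝ) (s : Set ℝ) : Prop where
  nonneg : ∀ y ∈ s, 0 ≤ W y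
  exists_hasDerivAt : ∃ W' W'' : ℝ → ℝ, ∀ y ∈ s,
    HasDerivAt W (W' y) y ∧ HasDerivAt W' (W'' y) y ∧ W'' y ≤ p y * W y

namespace IsSupersolutionOn

variable {p V W : ℝ → ℝ} {s t : Set ℝ}

lemma mono (hW : IsSupersolutionOn p W s) (hts : t ⊆ s) : IsSupersolutionOn p W t where
  nonneg y hy := hW.nonneg y (hts hy)
  exists_hasDerivAt :=
    let ⟨W', W'', h⟩ := hW.exists_hasDerivAt
    ⟨W', W'', fun y hy ↦ h y (hts hy)⟩

lemma continuousOn (hW : IsSupersolutionOn p W s) : ContinuousOn W s :=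
  let ⟨_, _, h⟩ := hW.exists_hasDerivAt
  fun y hy ↦ (h y hy).1.continuousAt.continuousWithinAt

lemma add (hV : IsSupersolutionOn p V s) (hW : IsSupersolutionOn p W s) :
    IsSupersolutionOn p (fun y ↦ V y + W y) s where
  nonneg y hy := add_nonneg (hV.nonneg y hy) (hW.nonneg y hy)
  exists_hasDerivAt := by
    obtain ⟨V', V'', hV'⟩ := hV.exists_hasDerivAt
    obtain ⟨W', W'', hW'⟩ := hW.exists_hasDerivAt
    refine ⟨fun y ↦ V' y + W' y, fun y ↦ V'' y + W'' y, fun y hy ↦ ?_⟩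
    obtain ⟨hV₁, hV₂, hV₃⟩ := hV' y hy
    obtain ⟨hW₁, hW₂, hW₃⟩ := hW' y hy
    exact ⟨hV₁.add hW₁, hV₂.add hW₂, by linarith⟩

lemma const_mul (hW : IsSupersolutionOn p W s) {K : ℝ} (hK : 0 ≤ K) :
    IsSupersolutionOn p (fun y ↦ K * W y) s where
  nonneg y hy := mul_nonneg hK (hW.nonneg y hy)
  exists_hasDerivAt := by
    obtain ⟨W', W'', hW'⟩ := hW.exists_hasDerivAt
    refine ⟨fun y ↦ K * W' y, fun y ↦ K * W'' y, fun y hy ↦ ?_⟩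
    obtain ⟨hW₁, hW₂, hW₃⟩ := hW' y hy
    exact ⟨hW₁.const_mul K, hW₂.const_mul K, by nlinarith⟩

lemma exp {h h' h'' : ℝ → ℝ} (hh : ∀ y ∈ s, HasDerivAt h (h' y) y)
    (hh' : ∀ y ∈ s, HasDerivAt h' (h'' y) y) (hp : ∀ y ∈ s, h' y ^ 2 + h'' y ≤ p y) :
    IsSupersolutionOn p (fun y ↦ Real.exp (h y)) s where
  nonneg y _ := (Real.exp_pos _).le
  exists_hasDerivAt := by
    refine ⟨fun y ↦ Real.exp (h y) * h' y, fun y ↦ (h' y ^ 2 + h'' y) * Real.exp (h y),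
      fun y hy ↦ ⟨(hh y hy).exp, ?_, ?_⟩⟩
    · exact ((hh y hy).exp.mul (hh' y hy)).congr_deriv (by ring)
    · exact mul_le_mul_of_nonneg_right (hp y hy) (Real.exp_pos _).le

end IsSupersolutionOn

section Comparison

variable {E : Type*} [NormedAddCommGroup E] [InnerProductSpace ℝ E]

-- Projecting onto the direction `e` of `u x` replaces `‖u‖`, which need not be twice
-- differentiable, by a smooth function that touches it from below at `x`.
lemma inner_secondDeriv_le_of_isLocalMax_norm_sub {u u' : ℝ → E} {u'' : E} {W W' : ℝ → ℝ}
    {W'' x : ℝ} (hu : ∀ᶠ t in 𝓝 x, HasDerivAt u (u' t) t) (hu' : HasDerivAt u' u'' x)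
    (hW : ∀ᶠ t in 𝓝 x, HasDerivAt W (W' t) t) (hW' : HasDerivAt W' W'' x)
    (hmax : IsLocalMax (fun t ↦ ‖u t‖ - W t) x) :
    inner ℝ (u x) u'' ≤ ‖u x‖ * W'' := by
  rcases eq_or_ne (u x) 0 with hx | hx
  · simp [hx]
  have norm_pos : 0 < ‖u x‖ := norm_pos_iff.2 hx
  set e : E := ‖u x‖⁻¹ • u x with he
  have norm_e : ‖e‖ = 1 := norm_smul_inv_norm (𝕜 := ℝ) hx
  have inner_le (t : ℝ) : inner ℝ e (u t) ≤ ‖u t‖ := by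
    simpa [norm_e] using real_inner_le_norm e (u t)
  have inner_eq : inner ℝ e (u x) = ‖u x‖ := by
    rw [he, real_inner_smul_left, real_inner_self_eq_norm_sq]
    field_simp
  have hderiv {w : ℝ → E} {w' : E} {t : ℝ} (hw : HasDerivAt w w' t) :
      HasDerivAt (fun t ↦ inner ℝ e (w t)) (inner ℝ e w') t :=
    (innerSL ℝ e).hasFDerivAt.comp_hasDerivAt t hw
  have hlocal : IsLocalMax (fun t ↦ inner ℝ e (u t) - W t) x := by
    filter_upwards [hmax] with t ht
    linarith [inner_le t]
  have hnonpos : inner ℝ e u'' - W'' ≤ 0 :=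
    secondDeriv_nonpos_of_isLocalMax (hu.and hW |>.mono fun t h ↦ (hderiv h.1).sub h.2)
      ((hderiv hu').sub hW') hlocal
  rw [he, real_inner_smul_left, sub_nonpos, inv_mul_le_iff₀ norm_pos] at hnonpos
  exact hnonpos

variable {u u' u'' : ℝ → E} {p V W : ℝ → ℝ} {a b : ℝ}

lemma norm_le_of_isSupersolutionOn_Icc
    (hu : ∀ y ∈ Icc a b, HasDerivAt u (u' y) y) (hu' : ∀ y ∈ Icc a b, HasDerivAt u' (u'' y) y)
    (hp : ∀ y ∈ Icc a b, 0 < p y) (hsub : ∀ y ∈ Icc a b, p y * ‖u y‖ ^ 2 ≤ inner ℝ (u y) (u'' y))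
    (hW : IsSupersolutionOn p W (Icc a b)) (ha : ‖u a‖ ≤ W a) (hb : ‖u b‖ ≤ W b) :
    ∀ y ∈ Icc a b, ‖u y‖ ≤ W y := by
  intro y hy
  by_contra! hlt
  have hcont : ContinuousOn (fun t ↦ ‖u t‖ - W t) (Icc a b) :=
    ContinuousOn.sub (fun t ht ↦ (hu t ht).continuousAt.continuousWithinAt.norm) hW.continuousOn
  obtain ⟨x, hx, hmax⟩ := isCompact_Icc.exists_isMaxOn ⟨y, hy⟩ hcont
  have hWx : W x < ‖u x‖ := by have : _ ≤ ‖u x‖ - W x := hmax hy; linarith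
  have hax : a < x := lt_of_le_of_ne hx.1 (by rintro rfl; linarith)
  have hxb : x < b := lt_of_le_of_ne hx.2 (by rintro rfl; linarith)
  have hnhds : Icc a b ∈ 𝓝 x := Icc_mem_nhds hax hxb
  obtain ⟨W', W'', hW'⟩ := hW.exists_hasDerivAt
  have hle : inner ℝ (u x) (u'' x) ≤ ‖u x‖ * W'' x :=
    inner_secondDeriv_le_of_isLocalMax_norm_sub (eventually_of_mem hnhds hu) (hu' x hx)
      (eventually_of_mem hnhds fun t ht ↦ (hW' t ht).1) (hW' x hx).2.1 (hmax.isLocalMax hnhds)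
  have norm_pos : 0 < ‖u x‖ := (hW.nonneg x hx).trans_lt hWx
  have : ‖u x‖ * (p x * ‖u x‖) ≤ ‖u x‖ * (p x * W x) :=
    calc ‖u x‖ * (p x * ‖u x‖) = p x * ‖u x‖ ^ 2 := by ring
      _ ≤ ‖u x‖ * W'' x := (hsub x hx).trans hle
      _ ≤ ‖u x‖ * (p x * W x) := by gcongr; exact (hW' x hx).2.2
  have : ‖u x‖ ≤ W x := le_of_mul_le_mul_left (le_of_mul_le_mul_left this norm_pos) (hp x hx)
  exact hWx.not_ge this

lemma norm_le_of_isSupersolutionOn_Ici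
    (hu : ∀ y ∈ Ici a, HasDerivAt u (u' y) y) (hu' : ∀ y ∈ Ici a, HasDerivAt u' (u'' y) y)
    (hp : ∀ y ∈ Ici a, 0 < p y) (hsub : ∀ y ∈ Ici a, p y * ‖u y‖ ^ 2 ≤ inner ℝ (u y) (u'' y))
    (hW : IsSupersolutionOn p W (Ici a)) (hV : IsSupersolutionOn p V (Ici a))
    (ha : ‖u a‖ ≤ W a) (huV : u =o[atTop] V) :
    ∀ y ∈ Ici a, ‖u y‖ ≤ W y := by
  intro y hy
  have perturbed (ε : ℝ) (hε : 0 < ε) : ‖u y‖ ≤ W y + ε * V y := by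
    obtain ⟨b, hb, hyb⟩ := ((huV.bound hε).and (eventually_ge_atTop y)).exists
    have hab : a ≤ b := le_trans hy hyb
    rw [Real.norm_of_nonneg (hV.nonneg b hab)] at hb
    refine norm_le_of_isSupersolutionOn_Icc (fun t ht ↦ hu t ht.1) (fun t ht ↦ hu' t ht.1)
      (fun t ht ↦ hp t ht.1) (fun t ht ↦ hsub t ht.1)
      ((hW.add (hV.const_mul hε.le)).mono Icc_subset_Ici_self) ?_ ?_ y ⟨hy, hyb⟩
    · exact ha.trans (le_add_of_nonneg_right (mul_nonneg hε.le (hV.nonneg a self_mem_Ici)))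
    · exact hb.trans (le_add_of_nonneg_left (hW.nonneg b hab))
  have htendsto : Tendsto (fun ε ↦ W y + ε * V y) (𝓝[>] 0) (𝓝 (W y)) := by
    have : Continuous fun ε ↦ W y + ε * V y := by fun_prop
    simpa using (this.tendsto 0).mono_left nhdsWithin_le_nhds
  exact ge_of_tendsto htendsto (eventually_mem_nhdsWithin.mono perturbed)

end Comparison

section WhittakerEquation

variable {ω c y₀ : ℝ}

lemma whittakerPotential_pos (hω : 0 < ω) (hy₀ : 0 < y₀) (hc : 2 * c ≤ (ω * y₀) ^ 2) :
    ∀ y ∈ Ici y₀, 0 < ω ^ 2 - c / y ^ 2 := by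
  intro y hy
  have y_pos : 0 < y := hy₀.trans_le hy
  have : (ω * y₀) ^ 2 ≤ (ω * y) ^ 2 := by gcongr; exact hy
  have : 0 < (ω * y) ^ 2 := by positivity
  rw [sub_pos, div_lt_iff₀ (by positivity)]
  linarith [mul_pow ω y 2]

lemma whittakerPotential_mul_norm_sq_le_inner (ω y : ℝ) (μ z : ℂ) :
    (ω ^ 2 - ‖μ‖ / y ^ 2) * ‖z‖ ^ 2 ≤ inner ℝ z (((ω : ℂ) ^ 2 - μ / (y : ℂ) ^ 2) * z) := by
  have inner_eq (q : ℂ) : inner ℝ z (q * z) = q.re * ‖z‖ ^ 2 := by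
    rw [Complex.inner, mul_assoc, Complex.mul_conj, Complex.re_mul_ofReal,
      Complex.normSq_eq_norm_sq]
  have re_eq : ((ω : ℂ) ^ 2 - μ / (y : ℂ) ^ 2).re = ω ^ 2 - μ.re / y ^ 2 := by
    rw [Complex.sub_re, ← Complex.ofReal_pow, ← Complex.ofReal_pow, Complex.div_ofReal_re,
      Complex.ofReal_re]
  rw [inner_eq, re_eq]
  gcongr
  exact Complex.re_le_norm μ

/-- The exponent of the barriers `exp (± h)` for `u'' = (ω² - c / y²) u`. The coefficient `c / ω`
of `1 / y` makes the terms of order `1 / y²` in `h'² ± h''` equal to `- 2 c / y²`, which leaves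
room `c / y²` to absorb the lower order terms. -/
noncomputable def barrierExponent (ω c y : ℝ) : ℝ := ω * y + c / ω / y

lemma hasDerivAt_barrierExponent {y : ℝ} (hy : y ≠ 0) :
    HasDerivAt (barrierExponent ω c) (ω - c / ω / y ^ 2) y := by
  have := ((hasDerivAt_id y).const_mul ω).add ((hasDerivAt_inv hy).const_mul (c / ω))
  exact this.congr_deriv (by ring)

lemma hasDerivAt_deriv_barrierExponent {y : ℝ} (hy : y ≠ 0) :
    HasDerivAt (fun t ↦ ω - c / ω / t ^ 2) (2 * (c / ω) / y ^ 3) y := by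
  have := (((hasDerivAt_pow 2 y).inv (pow_ne_zero 2 hy)).const_mul (c / ω)).const_sub ω
  exact this.congr_deriv (by field_simp; ring)

lemma barrierExponent_deriv_sq_add_le {y : ℝ} (hω : 0 < ω) (hc : 0 ≤ c) (hy : 4 ≤ ω * y)
    (hcy : 2 * c ≤ (ω * y) ^ 2) :
    (ω - c / ω / y ^ 2) ^ 2 + 2 * (c / ω) / y ^ 3 ≤ ω ^ 2 - c / y ^ 2 := by
  have y_pos : 0 < y := pos_of_mul_pos_right (by linarith) hω.le
  have quadratic_term : c ^ 2 / (ω * y) ^ 2 ≤ c / 2 := by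
    rw [div_le_iff₀ (by positivity)]
    nlinarith
  have linear_term : 2 * c / (ω * y) ≤ c / 2 := by
    rw [div_le_iff₀ (by positivity)]
    nlinarith
  calc (ω - c / ω / y ^ 2) ^ 2 + 2 * (c / ω) / y ^ 3
      = ω ^ 2 - 2 * c / y ^ 2 + (c ^ 2 / (ω * y) ^ 2 + 2 * c / (ω * y)) / y ^ 2 := by
        field_simp
        ring
    _ ≤ ω ^ 2 - 2 * c / y ^ 2 + (c / 2 + c / 2) / y ^ 2 := by gcongr
    _ = ω ^ 2 - c / y ^ 2 := by ring

lemma isSupersolutionOn_exp_barrierExponent {σ : ℝ} (hσ : |σ| = 1) (hω : 0 < ω) (hc : 0 ≤ c)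
    (hy₀ : 4 ≤ ω * y₀) (hcy₀ : 2 * c ≤ (ω * y₀) ^ 2) :
    IsSupersolutionOn (fun y ↦ ω ^ 2 - c / y ^ 2)
      (fun y ↦ Real.exp (σ * barrierExponent ω c y)) (Ici y₀) := by
  have hωy {y : ℝ} (hy : y ∈ Ici y₀) : ω * y₀ ≤ ω * y := by gcongr; exact hy
  have y_pos {y : ℝ} (hy : y ∈ Ici y₀) : 0 < y :=
    pos_of_mul_pos_right (by linarith [hωy hy]) hω.le
  refine .exp (fun y hy ↦ (hasDerivAt_barrierExponent (y_pos hy).ne').const_mul σ)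
    (fun y hy ↦ (hasDerivAt_deriv_barrierExponent (y_pos hy).ne').const_mul σ) fun y hy ↦ ?_
  have hy_pos := y_pos hy
  have sq_eq : σ ^ 2 = 1 := by rw [← sq_abs, hσ, one_pow]
  have le_one : σ ≤ 1 := (le_abs_self σ).trans hσ.le
  calc (σ * (ω - c / ω / y ^ 2)) ^ 2 + σ * (2 * (c / ω) / y ^ 3)
      ≤ (ω - c / ω / y ^ 2) ^ 2 + 2 * (c / ω) / y ^ 3 := by
        rw [mul_pow, sq_eq, one_mul]
        gcongr
        exact mul_le_of_le_one_left (by positivity) le_one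
    _ ≤ ω ^ 2 - c / y ^ 2 :=
      barrierExponent_deriv_sq_add_le hω hc (hy₀.trans (hωy hy))
        (hcy₀.trans (pow_le_pow_left₀ (by linarith) (hωy hy) 2))

variable {μ : ℂ} {u u' u'' : ℝ → ℂ}

lemma norm_le_mul_exp_of_whittaker_ode (hω : 0 < ω) (hy₀ : 4 ≤ ω * y₀)
    (hμ : 2 * ‖μ‖ ≤ (ω * y₀) ^ 2)
    (hu : ∀ y ∈ Ici y₀, HasDerivAt u (u' y) y) (hu' : ∀ y ∈ Ici y₀, HasDerivAt u' (u'' y) y)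
    (hode : ∀ y ∈ Ici y₀, u'' y = ((ω : ℂ) ^ 2 - μ / (y : ℂ) ^ 2) * u y)
    (hgrowth : u =o[atTop] fun y ↦ Real.exp (ω * y)) :
    ∀ y ∈ Ici y₀, ‖u y‖ ≤ ‖u y₀‖ * Real.exp (‖μ‖ / (ω * y₀)) * Real.exp (-(ω * (y - y₀))) := by
  have y₀_pos : 0 < y₀ := pos_of_mul_pos_right (by linarith) hω.le
  set h : ℝ → ℝ := barrierExponent ω ‖μ‖
  have hbarrier (σ : ℝ) (hσ : |σ| = 1) := isSupersolutionOn_exp_barrierExponent hσ hω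
    (norm_nonneg μ) hy₀ hμ
  have hgrowth' : u =o[atTop] fun y ↦ Real.exp (1 * h y) := by
    refine hgrowth.trans_isBigO (.of_norm_eventuallyLE ?_)
    filter_upwards [eventually_gt_atTop 0] with y y_pos
    rw [Real.norm_of_nonneg (by positivity), one_mul]
    exact Real.exp_le_exp.2 (le_add_of_nonneg_right (by positivity))
  intro y hy
  have hcompare : ‖u y‖ ≤ ‖u y₀‖ * Real.exp (h y₀) * Real.exp (-1 * h y) := by
    refine norm_le_of_isSupersolutionOn_Ici hu hu' (whittakerPotential_pos hω y₀_pos hμ)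
      (fun t ht ↦ ?_) ((hbarrier (-1) (by simp)).const_mul (by positivity))
      (hbarrier 1 (by simp)) ?_ hgrowth' y hy
    · rw [hode t ht]
      exact whittakerPotential_mul_norm_sq_le_inner ω t μ (u t)
    · rw [mul_assoc, ← Real.exp_add, neg_one_mul, add_neg_cancel, Real.exp_zero, mul_one]
  have y_pos : 0 < y := y₀_pos.trans_le hy
  have hexponent : h y₀ + -1 * h y ≤ ‖μ‖ / (ω * y₀) + -(ω * (y - y₀)) := by
    have : 0 ≤ ‖μ‖ / ω / y := by positivity
    simp only [h, barrierExponent, ← div_div]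
    linarith
  calc ‖u y‖ ≤ ‖u y₀‖ * Real.exp (h y₀ + -1 * h y) := by rwa [Real.exp_add, ← mul_assoc]
    _ ≤ ‖u y₀‖ * Real.exp (‖μ‖ / (ω * y₀) + -(ω * (y - y₀))) := by gcongr
    _ = _ := by rw [Real.exp_add, mul_assoc]

end WhittakerEquation

section DirDeriv

variable {E F : Type*} [NormedAddCommGroup E] [NormedSpace ℝ E] [NormedAddCommGroup F]
  [NormedSpace ℝ F] {f : E → F} {s : Set E} {z : E}

/-- The directional derivative `∂_v f` as a function on the whole space, so that it can be iterated.
It is defined through the Fréchet derivative, hence zero where `f` is not differentiable. -/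
noncomputable def dirDeriv (v : E) (f : E → F) (z : E) : F := fderiv ℝ f z v

lemma contDiffOn_dirDeriv {m n : WithTop ℕ∞} (hs : IsOpen s) (hf : ContDiffOn ℝ n f s)
    (hmn : m + 1 ≤ n) (v : E) : ContDiffOn ℝ m (dirDeriv v f) s :=
  (hf.fderiv_of_isOpen hs hmn).clm_apply contDiffOn_const

lemma hasDerivAt_comp_add_smul {w v : E} {t : ℝ} (hf : DifferentiableAt ℝ f (w + t • v)) :
    HasDerivAt (fun r : ℝ ↦ f (w + r • v)) (dirDeriv v f (w + t • v)) t := by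
  have hline : HasDerivAt (fun r : ℝ ↦ w + r • v) v t := by
    simpa using ((hasDerivAt_id t).smul_const v).const_add w
  exact hf.hasFDerivAt.comp_hasDerivAt t hline

lemma dirDeriv_dirDeriv_eq_iteratedFDeriv (hf : ContDiffAt ℝ 2 f z) (v : E) :
    dirDeriv v (dirDeriv v f) z = iteratedFDeriv ℝ 2 f z ![v, v] := by
  have hdiff : DifferentiableAt ℝ (fderiv ℝ f) z :=
    (hf.fderiv_right (m := 1) le_rfl).differentiableAt one_ne_zero
  have : HasFDerivAt (dirDeriv v f) _ z := hdiff.hasFDerivAt.clm_apply (hasFDerivAt_const v z)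
  simp [iteratedFDeriv_two_apply, dirDeriv.eq_1 v (dirDeriv v f), this.fderiv]

lemma iteratedDeriv_two_comp_add_smul (hf : ContDiffAt ℝ 2 f z) (v : E) :
    iteratedDeriv 2 (fun t : ℝ ↦ f (z + t • v)) 0 = dirDeriv v (dirDeriv v f) z := by
  have hline : Tendsto (fun t : ℝ ↦ z + t • v) (𝓝 0) (𝓝 z) := by
    have : Continuous fun t : ℝ ↦ z + t • v := by fun_prop
    simpa using this.tendsto 0
  have hderiv : deriv (fun t : ℝ ↦ f (z + t • v)) =ᶠ[𝓝 0] fun t ↦ dirDeriv v f (z + t • v) := by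
    filter_upwards [hline.eventually (hf.eventually (by simp))] with t ht
    exact (hasDerivAt_comp_add_smul (ht.differentiableAt two_ne_zero)).deriv
  have hdiff : DifferentiableAt ℝ (dirDeriv v f) (z + (0 : ℝ) • v) := by
    rw [zero_smul, add_zero]
    exact ((hf.fderiv_right (m := 1) le_rfl).clm_apply contDiffAt_const).differentiableAt
      one_ne_zero
  rw [iteratedDeriv_succ, iteratedDeriv_one, hderiv.deriv_eq,
    (hasDerivAt_comp_add_smul hdiff).deriv, zero_smul, add_zero]

lemma laplacian_eq_dirDeriv_one_add_dirDeriv_I {f : ℂ → F} {z : ℂ} (hf : ContDiffAt ℝ 2 f z) :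
    Δ f z = dirDeriv 1 (dirDeriv 1 f) z + dirDeriv Complex.I (dirDeriv Complex.I f) z := by
  rw [InnerProductSpace.laplacian_eq_iteratedFDeriv_complexPlane,
    dirDeriv_dirDeriv_eq_iteratedFDeriv hf, dirDeriv_dirDeriv_eq_iteratedFDeriv hf]

lemma dirDeriv_add_of_periodicOn {c : E} (hs : IsOpen s) (hper : ∀ z ∈ s, f (z + c) = f z) (v : E) :
    ∀ z ∈ s, dirDeriv v f (z + c) = dirDeriv v f z := by
  intro z hz
  have hev : (fun w ↦ f (w + c)) =ᶠ[𝓝 z] f := eventually_of_mem (hs.mem_nhds hz) hper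
  rw [dirDeriv, dirDeriv, ← hev.fderiv_eq, fderiv_comp_add_right]

end DirDeriv

section FourierSeries

variable {a b : ℝ} {hab : a < b} {f : ℝ → ℂ} {B : ℝ}

lemma continuous_fourier_coe (T : ℝ) (n : ℤ) :
    Continuous fun x : ℝ ↦ fourier n (x : AddCircle T) :=
  (map_continuous _).comp (AddCircle.continuous_mk' _)

lemma fourierCoeffOn_add {g : ℝ → ℂ} (hf : IntervalIntegrable f volume a b)
    (hg : IntervalIntegrable g volume a b) (n : ℤ) :
    fourierCoeffOn hab (fun x ↦ f x + g x) n = fourierCoeffOn hab f n + fourierCoeffOn hab g n := by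
  have hcont := continuous_fourier_coe (b - a) (-n)
  simp only [fourierCoeffOn_eq_integral, smul_eq_mul, mul_add]
  rw [intervalIntegral.integral_add (hf.continuousOn_mul hcont.continuousOn)
    (hg.continuousOn_mul hcont.continuousOn), smul_add]

lemma norm_fourierCoeffOn_le (n : ℤ) (hf : ∀ x ∈ Ioc a b, ‖f x‖ ≤ B) :
    ‖fourierCoeffOn hab f n‖ ≤ B := by
  have hba : 0 < b - a := sub_pos.2 hab
  have : ‖∫ x in a..b, fourier (-n) (x : AddCircle (b - a)) • f x‖ ≤ B * |b - a| :=
    intervalIntegral.norm_integral_le_of_norm_le_const fun x hx ↦ by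
      rw [norm_smul, fourier_apply, Circle.norm_coe, one_mul]
      exact hf x (uIoc_of_le hab.le ▸ hx)
  rw [fourierCoeffOn_eq_integral, norm_smul, Real.norm_of_nonneg (by positivity), one_div,
    inv_mul_le_iff₀ hba, mul_comm]
  rwa [abs_of_pos hba] at this

lemma norm_le_tsum_of_norm_fourierCoeffOn_le {c : ℤ → ℝ} (hf : ContinuousOn f (Icc a b))
    (hfab : f a = f b) (hc : Summable c) (hfc : ∀ n, ‖fourierCoeffOn hab f n‖ ≤ c n) :
    ∀ x ∈ Ioc a b, ‖f x‖ ≤ ∑' n, c n := by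
  intro x hx
  have : Fact (0 < b - a) := ⟨sub_pos.2 hab⟩
  have hend : a + (b - a) = b := add_sub_cancel a b
  let g : C(AddCircle (b - a), ℂ) := ⟨AddCircle.liftIoc (b - a) a f,
    AddCircle.liftIoc_continuous (by rwa [hend]) (by rwa [hend])⟩
  have hg (n : ℤ) : ‖fourierCoeff g n‖ ≤ c n := hfc n
  have hgx : g (x : AddCircle (b - a)) = f x := AddCircle.liftIoc_coe_apply (by rwa [hend])
  have hsum := has_pointwise_sum_fourier_series_of_summable (hc.of_norm_bounded hg) x
  rw [← hgx, ← hsum.tsum_eq]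
  refine tsum_of_norm_bounded hc.hasSum fun n ↦ ?_
  rw [norm_smul, fourier_apply, Circle.norm_coe, mul_one]
  exact hg n

lemma summable_exp_neg_mul_abs_int {r : ℝ} (hr : 0 < r) :
    Summable fun n : ℤ ↦ Real.exp (-(r * |(n : ℝ)|)) := by
  have h : Summable fun n : ℕ ↦ Real.exp (n * -r) :=
    Real.summable_exp_nat_mul_iff.2 (neg_lt_zero.2 hr)
  refine .of_nat_of_neg (h.congr fun n ↦ ?_) (h.congr fun n ↦ ?_) <;>
    simp [mul_comm]

lemma norm_le_of_norm_fourierCoeffOn_le_exp {M r t : ℝ} (hf : ContinuousOn f (Icc a b))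
    (hfab : f a = f b) (hr : 0 < r) (ht : 1 ≤ t) (hM : 0 ≤ M) (hzero : fourierCoeffOn hab f 0 = 0)
    (hfM : ∀ n ≠ 0, ‖fourierCoeffOn hab f n‖ ≤ M * Real.exp (-(r * |(n : ℝ)| * t))) :
    ∀ x ∈ Ioc a b,
      ‖f x‖ ≤ M * Real.exp (-(r * (t - 1))) * ∑' n : ℤ, Real.exp (-(r * |(n : ℝ)|)) := by
  intro x hx
  rw [← tsum_mul_left]
  refine norm_le_tsum_of_norm_fourierCoeffOn_le (hab := hab) hf hfab
    ((summable_exp_neg_mul_abs_int hr).mul_left _) (fun n ↦ ?_) x hx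
  rcases eq_or_ne n 0 with rfl | hn
  · rw [hzero, norm_zero]
    positivity
  have one_le : (1 : ℝ) ≤ |(n : ℝ)| := by exact_mod_cast Int.one_le_abs hn
  have hexponent : (t - 1) + |(n : ℝ)| ≤ |(n : ℝ)| * t := by nlinarith
  calc ‖fourierCoeffOn hab f n‖ ≤ M * Real.exp (-(r * |(n : ℝ)| * t)) := hfM n hn
    _ ≤ M * Real.exp (-(r * (t - 1)) + -(r * |(n : ℝ)|)) := by
      gcongr
      nlinarith
    _ = M * Real.exp (-(r * (t - 1))) * Real.exp (-(r * |(n : ℝ)|)) := by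
      rw [Real.exp_add, mul_assoc]

end FourierSeries

section HorizontalFourierCoeff

variable {f : ℂ → ℂ} {y : ℝ}

lemma ofReal_add_ofReal_mul_I_mem_upperHalfPlaneSet (x : ℝ) (hy : 0 < y) :
    (x + y * I : ℂ) ∈ upperHalfPlaneSet := by
  simpa using hy

lemma continuous_horizontal (hf : ContinuousOn f upperHalfPlaneSet) (hy : 0 < y) :
    Continuous fun x : ℝ ↦ f (x + y * I) :=
  hf.comp_continuous (by fun_prop) fun x ↦ ofReal_add_ofReal_mul_I_mem_upperHalfPlaneSet x hy

lemma hasDerivAt_vertical (hf : ContDiffOn ℝ 1 f upperHalfPlaneSet) (x : ℝ) (hy : 0 < y) :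
    HasDerivAt (fun t : ℝ ↦ f (x + t * I)) (dirDeriv I f (x + y * I)) y := by
  have hdiff := (hf.differentiableOn one_ne_zero).differentiableAt
    (isOpen_upperHalfPlaneSet.mem_nhds (ofReal_add_ofReal_mul_I_mem_upperHalfPlaneSet x hy))
  simp only [← Complex.real_smul] at hdiff ⊢
  exact hasDerivAt_comp_add_smul hdiff

lemma hasDerivAt_horizontal (hf : ContDiffOn ℝ 1 f upperHalfPlaneSet) (x : ℝ) (hy : 0 < y) :
    HasDerivAt (fun t : ℝ ↦ f (t + y * I)) (dirDeriv 1 f (x + y * I)) x := by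
  have hdiff := (hf.differentiableOn one_ne_zero).differentiableAt
    (isOpen_upperHalfPlaneSet.mem_nhds (ofReal_add_ofReal_mul_I_mem_upperHalfPlaneSet x hy))
  have hline (t : ℝ) : (t + y * I : ℂ) = y * I + t • (1 : ℂ) := by simp [add_comm]
  simp only [hline] at hdiff ⊢
  exact hasDerivAt_comp_add_smul hdiff

lemma periodic_horizontal (hper : ∀ z ∈ upperHalfPlaneSet, f (z + 1) = f z) (hy : 0 < y) :
    Function.Periodic (fun x : ℝ ↦ f (x + y * I)) 1 := by
  intro x
  dsimp only
  rw [← hper _ (ofReal_add_ofReal_mul_I_mem_upperHalfPlaneSet x hy)]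
  push_cast
  ring_nf

lemma exists_norm_le_of_mem_Icc (hf : ContinuousOn f upperHalfPlaneSet) (c d : ℝ) {a : ℝ}
    (ha : 0 < a) (b : ℝ) : ∃ B, ∀ x ∈ Icc c d, ∀ y ∈ Icc a b, ‖f (x + y * I)‖ ≤ B := by
  have hcont : ContinuousOn (fun p : ℝ × ℝ ↦ f (p.1 + p.2 * I)) (Icc c d ×ˢ Icc a b) :=
    hf.comp (by fun_prop) fun p hp ↦
      ofReal_add_ofReal_mul_I_mem_upperHalfPlaneSet p.1 (ha.trans_le hp.2.1)
  obtain ⟨B, hB⟩ := (isCompact_Icc.prod isCompact_Icc).exists_bound_of_continuousOn hcont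
  exact ⟨B, fun x hx y hy ↦ hB (x, y) ⟨hx, hy⟩⟩

lemma exists_norm_le_of_periodicOn (hf : ContinuousOn f upperHalfPlaneSet)
    (hper : ∀ z ∈ upperHalfPlaneSet, f (z + 1) = f z) {a : ℝ} (ha : 0 < a) (b : ℝ) :
    ∃ B, ∀ x : ℝ, ∀ y ∈ Icc a b, ‖f (x + y * I)‖ ≤ B := by
  obtain ⟨B, hB⟩ := exists_norm_le_of_mem_Icc hf 0 1 ha b
  refine ⟨B, fun x y hy ↦ ?_⟩
  obtain ⟨t, ht, htx⟩ :=
    (periodic_horizontal hper (ha.trans_le hy.1)).exists_mem_Ico₀ zero_lt_one x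
  rw [htx]
  exact hB t (Ico_subset_Icc_self ht) y hy

/-- The `n`-th Fourier coefficient of `x ↦ f (x + i y)` on `[0, 1]`, as a function of `y`. For a
Maaß form this is the `n`-th coefficient of its expansion at the cusp. -/
noncomputable def horizontalFourierCoeff (f : ℂ → ℂ) (n : ℤ) (y : ℝ) : ℂ :=
  fourierCoeffOn zero_lt_one (fun x : ℝ ↦ f (x + y * I)) n

lemma horizontalFourierCoeff_eq_integral (f : ℂ → ℂ) (n : ℤ) (y : ℝ) :
    horizontalFourierCoeff f n y =
      ∫ x in (0 : ℝ)..1, fourier (-n) (x : AddCircle ((1 : ℝ) - 0)) • f (x + y * I) := by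
  rw [horizontalFourierCoeff, fourierCoeffOn_eq_integral, sub_zero, one_div_one, one_smul]

lemma hasDerivAt_horizontalFourierCoeff (hf : ContDiffOn ℝ 1 f upperHalfPlaneSet) (n : ℤ)
    (hy : 0 < y) :
    HasDerivAt (horizontalFourierCoeff f n) (horizontalFourierCoeff (dirDeriv I f) n y) y := by
  have hdf : ContinuousOn (dirDeriv I f) upperHalfPlaneSet :=
    (contDiffOn_dirDeriv (m := 0) isOpen_upperHalfPlaneSet hf (by simp) I).continuousOn
  have hfourier := continuous_fourier_coe (1 - 0) (-n)
  obtain ⟨B, hB⟩ := exists_norm_le_of_mem_Icc hdf 0 1 (half_pos hy) (2 * y)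
  rw [funext (horizontalFourierCoeff_eq_integral f n), horizontalFourierCoeff_eq_integral]
  refine (intervalIntegral.hasDerivAt_integral_of_dominated_loc_of_deriv_le
    (F := fun t x : ℝ ↦ fourier (-n) (x : AddCircle ((1 : ℝ) - 0)) • f (x + t * I))
    (F' := fun t x : ℝ ↦ fourier (-n) (x : AddCircle ((1 : ℝ) - 0)) • dirDeriv I f (x + t * I))
    (bound := fun _ ↦ B) (s := Icc (y / 2) (2 * y))
    (Icc_mem_nhds (half_lt_self hy) (by linarith)) ?_ ?_ ?_ ?_ ?_ ?_).2
  · filter_upwards [lt_mem_nhds hy] with t ht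
    exact (hfourier.smul (continuous_horizontal hf.continuousOn ht)).aestronglyMeasurable
  · exact (hfourier.smul (continuous_horizontal hf.continuousOn hy)).intervalIntegrable _ _
  · exact (hfourier.smul (continuous_horizontal hdf hy)).aestronglyMeasurable
  · refine .of_forall fun x hx t ht ↦ ?_
    rw [norm_smul, fourier_apply, Circle.norm_coe, one_mul]
    rw [uIoc_of_le zero_le_one] at hx
    exact hB x (Ioc_subset_Icc_self hx) t ht
  · exact intervalIntegrable_const
  · refine .of_forall fun x _ t ht ↦ ?_
    exact (hasDerivAt_vertical hf x (by linarith [ht.1])).const_mul _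

lemma horizontalFourierCoeff_dirDeriv_one (hf : ContDiffOn ℝ 1 f upperHalfPlaneSet)
    (hper : ∀ z ∈ upperHalfPlaneSet, f (z + 1) = f z) {n : ℤ} (hn : n ≠ 0) (hy : 0 < y) :
    horizontalFourierCoeff (dirDeriv 1 f) n y = 2 * π * I * n * horizontalFourierCoeff f n y := by
  have hdf : ContinuousOn (dirDeriv 1 f) upperHalfPlaneSet :=
    (contDiffOn_dirDeriv (m := 0) isOpen_upperHalfPlaneSet hf (by simp) 1).continuousOn
  have hend : f (((1 : ℝ) : ℂ) + y * I) - f (((0 : ℝ) : ℂ) + y * I) = 0 := by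
    simpa [sub_eq_zero] using periodic_horizontal hper hy 0
  have hparts := fourierCoeffOn_of_hasDerivAt zero_lt_one hn
    (fun x _ ↦ hasDerivAt_horizontal hf x hy)
    ((continuous_horizontal hdf hy).intervalIntegrable 0 1)
  rw [hend] at hparts
  rw [horizontalFourierCoeff, horizontalFourierCoeff, hparts]
  have hne : 2 * π * I * n ≠ 0 := by simp [Real.pi_ne_zero, hn]
  rw [mul_zero, zero_sub, Complex.ofReal_one, Complex.ofReal_zero, sub_zero, one_mul,
    show -2 * π * I * n = -(2 * π * I * n) by ring, div_neg, neg_mul_neg, ← mul_assoc,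
    mul_one_div_cancel hne, one_mul]

lemma horizontalFourierCoeff_zero_eq_zero (hcusp : ∫ x in (0 : ℝ)..1, f (x + y * I) = 0) :
    horizontalFourierCoeff f 0 y = 0 := by
  simpa [horizontalFourierCoeff_eq_integral] using hcusp

lemma isLittleO_horizontalFourierCoeff {g : ℝ → ℝ}
    (hf : f =o[comap Complex.im atTop] fun z ↦ g z.im) (n : ℤ) :
    horizontalFourierCoeff f n =o[atTop] g := by
  refine Asymptotics.isLittleO_iff.2 fun ε hε ↦ ?_
  filter_upwards [eventually_comap.1 (hf.bound hε)] with y hy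
  exact norm_fourierCoeffOn_le n fun x _ ↦ by simpa using hy (x + y * I) (by simp)

end HorizontalFourierCoeff

section PeriodicEigenfunction

variable {μ : ℂ} {f : ℂ → ℂ} {y : ℝ}

lemma dirDeriv_I_dirDeriv_I_eq_of_laplacian_eq {z : ℂ} (hf : ContDiffAt ℝ 2 f z)
    (hz : z.im ≠ 0) (heig : -(z.im : ℂ) ^ 2 * Δ f z = μ * f z) :
    dirDeriv I (dirDeriv I f) z =
      -1 * dirDeriv 1 (dirDeriv 1 f) z + -(μ / (z.im : ℂ) ^ 2) * f z := by
  rw [laplacian_eq_dirDeriv_one_add_dirDeriv_I hf] at heig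
  have hz' : (z.im : ℂ) ≠ 0 := by exact_mod_cast hz
  field_simp
  linear_combination -heig

lemma horizontalFourierCoeff_dirDeriv_I_dirDeriv_I (hf : ContDiffOn ℝ 2 f upperHalfPlaneSet)
    (hper : ∀ z ∈ upperHalfPlaneSet, f (z + 1) = f z)
    (heig : ∀ z ∈ upperHalfPlaneSet, -(z.im : ℂ) ^ 2 * Δ f z = μ * f z) {n : ℤ} (hn : n ≠ 0)
    (hy : 0 < y) :
    horizontalFourierCoeff (dirDeriv I (dirDeriv I f)) n y =
      (((2 * π * |(n : ℝ)| : ℝ) : ℂ) ^ 2 - μ / (y : ℂ) ^ 2) * horizontalFourierCoeff f n y := by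
  have hfx : ContDiffOn ℝ 1 (dirDeriv 1 f) upperHalfPlaneSet :=
    contDiffOn_dirDeriv isOpen_upperHalfPlaneSet hf one_add_one_eq_two.le 1
  have hfxx : ContinuousOn (dirDeriv 1 (dirDeriv 1 f)) upperHalfPlaneSet :=
    (contDiffOn_dirDeriv (m := 0) isOpen_upperHalfPlaneSet hfx (by simp) 1).continuousOn
  have hpointwise (x : ℝ) : dirDeriv I (dirDeriv I f) (x + y * I) =
      -1 * dirDeriv 1 (dirDeriv 1 f) (x + y * I) + -(μ / (y : ℂ) ^ 2) * f (x + y * I) := by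
    have hmem := ofReal_add_ofReal_mul_I_mem_upperHalfPlaneSet x hy
    have him : (x + y * I : ℂ).im = y := by simp
    simpa only [him] using dirDeriv_I_dirDeriv_I_eq_of_laplacian_eq
      (hf.contDiffAt (isOpen_upperHalfPlaneSet.mem_nhds hmem)) (by simpa using hy.ne')
      (heig _ hmem)
  have hfxx_coeff : horizontalFourierCoeff (dirDeriv 1 (dirDeriv 1 f)) n y =
      (2 * π * I * n) ^ 2 * horizontalFourierCoeff f n y := by
    rw [horizontalFourierCoeff_dirDeriv_one hfx
        (dirDeriv_add_of_periodicOn isOpen_upperHalfPlaneSet hper 1) hn hy,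
      horizontalFourierCoeff_dirDeriv_one (hf.of_le one_le_two) hper hn hy]
    ring
  have hsq : ((2 * π * |(n : ℝ)| : ℝ) : ℂ) ^ 2 = -(2 * π * I * n) ^ 2 := by
    rw [← Complex.ofReal_pow, mul_pow, sq_abs]
    push_cast
    linear_combination (2 * π * n : ℂ) ^ 2 * Complex.I_sq
  calc horizontalFourierCoeff (dirDeriv I (dirDeriv I f)) n y
      = -1 * horizontalFourierCoeff (dirDeriv 1 (dirDeriv 1 f)) n y +
          -(μ / (y : ℂ) ^ 2) * horizontalFourierCoeff f n y := by
        simp only [horizontalFourierCoeff, hpointwise]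
        rw [fourierCoeffOn_add, fourierCoeffOn.const_mul, fourierCoeffOn.const_mul]
        · exact ((continuous_horizontal hfxx hy).const_mul _).intervalIntegrable _ _
        · exact ((continuous_horizontal hf.continuousOn hy).const_mul _).intervalIntegrable _ _
    _ = _ := by
      rw [hfxx_coeff, hsq]
      ring

lemma norm_horizontalFourierCoeff_le_mul_exp (hf : ContDiffOn ℝ 2 f upperHalfPlaneSet)
    (hper : ∀ z ∈ upperHalfPlaneSet, f (z + 1) = f z)
    (heig : ∀ z ∈ upperHalfPlaneSet, -(z.im : ℂ) ^ 2 * Δ f z = μ * f z)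
    (hgrowth : f =o[comap Complex.im atTop] fun z ↦ Real.exp (2 * π * z.im))
    {B y₀ : ℝ} (hy₀ : 1 ≤ y₀) (hμ : ‖μ‖ ≤ y₀) (hB : ∀ x : ℝ, ‖f (x + y₀ * I)‖ ≤ B)
    {n : ℤ} (hn : n ≠ 0) (hy : y₀ ≤ y) :
    ‖horizontalFourierCoeff f n y‖ ≤
      B * Real.exp 1 * Real.exp (-(2 * π * |(n : ℝ)| * (y - y₀))) := by
  set ω : ℝ := 2 * π * |(n : ℝ)|
  have one_le_abs : (1 : ℝ) ≤ |(n : ℝ)| := by exact_mod_cast Int.one_le_abs hn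
  have two_pi_le : 2 * π ≤ ω := le_mul_of_one_le_right Real.two_pi_pos.le one_le_abs
  have four_le : 4 ≤ ω := by linarith [Real.pi_gt_three]
  have hωy₀ : 4 * y₀ ≤ ω * y₀ := by gcongr
  have hgrowth' : horizontalFourierCoeff f n =o[atTop] fun y ↦ Real.exp (ω * y) := by
    have hcoeff : horizontalFourierCoeff f n =o[atTop] fun y ↦ Real.exp (2 * π * y) :=
      isLittleO_horizontalFourierCoeff hgrowth n
    refine hcoeff.trans_isBigO (.of_norm_eventuallyLE ?_)
    filter_upwards [eventually_ge_atTop 0] with t ht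
    rw [Real.norm_of_nonneg (Real.exp_pos _).le]
    gcongr
  have hfy : ContDiffOn ℝ 1 (dirDeriv I f) upperHalfPlaneSet :=
    contDiffOn_dirDeriv isOpen_upperHalfPlaneSet hf one_add_one_eq_two.le I
  have pos {t : ℝ} (ht : t ∈ Ici y₀) : 0 < t := by linarith [mem_Ici.1 ht]
  calc ‖horizontalFourierCoeff f n y‖
      ≤ ‖horizontalFourierCoeff f n y₀‖ * Real.exp (‖μ‖ / (ω * y₀)) *
          Real.exp (-(ω * (y - y₀))) :=
        norm_le_mul_exp_of_whittaker_ode (by linarith) (by linarith) (by nlinarith)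
          (fun t ht ↦ hasDerivAt_horizontalFourierCoeff (hf.of_le one_le_two) n (pos ht))
          (fun t ht ↦ hasDerivAt_horizontalFourierCoeff hfy n (pos ht))
          (fun t ht ↦ horizontalFourierCoeff_dirDeriv_I_dirDeriv_I hf hper heig hn (pos ht))
          hgrowth' y hy
    _ ≤ B * Real.exp 1 * Real.exp (-(ω * (y - y₀))) := by
      gcongr
      · exact (norm_nonneg _).trans (hB 0)
      · exact norm_fourierCoeffOn_le n fun x _ ↦ hB x
      · exact div_le_one_of_le₀ (by linarith) (by linarith)

lemma norm_le_mul_exp_of_add_one_le (hf : ContDiffOn ℝ 2 f upperHalfPlaneSet)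
    (hper : ∀ z ∈ upperHalfPlaneSet, f (z + 1) = f z)
    (heig : ∀ z ∈ upperHalfPlaneSet, -(z.im : ℂ) ^ 2 * Δ f z = μ * f z)
    (hgrowth : f =o[comap Complex.im atTop] fun z ↦ Real.exp (2 * π * z.im))
    (hcusp : ∀ z ∈ upperHalfPlaneSet, ∫ t in (0 : ℝ)..1, f (z + t) = 0)
    {B y₀ : ℝ} (hy₀ : 1 ≤ y₀) (hμ : ‖μ‖ ≤ y₀) (hB : ∀ x : ℝ, ‖f (x + y₀ * I)‖ ≤ B)
    (hy : y₀ + 1 ≤ y) (x : ℝ) :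
    ‖f (x + y * I)‖ ≤ B * Real.exp 1 * Real.exp (-(2 * π * (y - y₀ - 1))) *
      ∑' n : ℤ, Real.exp (-(2 * π * |(n : ℝ)|)) := by
  have y_pos : 0 < y := by linarith
  have hperiodic := periodic_horizontal hper y_pos
  have hcoeff_zero : horizontalFourierCoeff f 0 y = 0 := by
    refine horizontalFourierCoeff_zero_eq_zero ?_
    simpa only [add_comm] using hcusp (y * I) (by simpa using y_pos)
  have B_nonneg : 0 ≤ B := (norm_nonneg _).trans (hB 0)
  obtain ⟨t, ht, htx⟩ := hperiodic.exists_mem_Ioc zero_lt_one x 0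
  rw [zero_add] at ht
  rw [htx]
  exact norm_le_of_norm_fourierCoeffOn_le_exp (t := y - y₀)
    (continuous_horizontal hf.continuousOn y_pos).continuousOn (by simpa using (hperiodic 0).symm)
    Real.two_pi_pos (by linarith) (by positivity) hcoeff_zero
    (fun n hn ↦ norm_horizontalFourierCoeff_le_mul_exp hf hper heig hgrowth hy₀ hμ hB hn
      (by linarith)) t ht

theorem stmt_12_general (hf : ContDiffOn ℝ 2 f upperHalfPlaneSet)
    (hper : ∀ z ∈ upperHalfPlaneSet, f (z + 1) = f z)
    (heig : ∀ z ∈ upperHalfPlaneSet, -(z.im : ℂ) ^ 2 * Δ f z = μ * f z)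
    (hgrowth : f =o[comap Complex.im atTop] fun z ↦ Real.exp (2 * π * z.im))
    (hcusp : ∀ z ∈ upperHalfPlaneSet, ∫ t in (0 : ℝ)..1, f (z + t) = 0) {b : ℝ} (hb : 0 < b) :
    ∃ K, 0 < K ∧ ∀ x y : ℝ, b ≤ y → ‖f (x + y * I)‖ ≤ K * Real.exp (-(2 * π * y)) := by
  set y₀ : ℝ := 1 + ‖μ‖
  set S : ℝ := ∑' n : ℤ, Real.exp (-(2 * π * |(n : ℝ)|))
  have hμ : 0 ≤ ‖μ‖ := norm_nonneg μ
  obtain ⟨B, hB⟩ := exists_norm_le_of_periodicOn hf.continuousOn hper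
    (lt_min hb (by positivity : 0 < y₀)) (y₀ + 1)
  have B_nonneg : 0 ≤ B :=
    (norm_nonneg _).trans (hB 0 y₀ ⟨min_le_right _ _, by linarith⟩)
  refine ⟨(B * Real.exp 1 * S + B + 1) * Real.exp (2 * π * (y₀ + 1)), by positivity,
    fun x y hy ↦ ?_⟩
  rw [mul_assoc, ← Real.exp_add]
  rcases le_total y (y₀ + 1) with hle | hge
  · calc ‖f (x + y * I)‖ ≤ B := hB x y ⟨(min_le_left _ _).trans hy, hle⟩
      _ ≤ (B * Real.exp 1 * S + B + 1) * 1 := by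
        have : 0 ≤ B * Real.exp 1 * S := by positivity
        linarith
      _ ≤ _ := by
        gcongr
        rw [Real.one_le_exp_iff]
        nlinarith [Real.pi_pos]
  · calc ‖f (x + y * I)‖ ≤ B * Real.exp 1 * Real.exp (-(2 * π * (y - y₀ - 1))) * S :=
        norm_le_mul_exp_of_add_one_le hf hper heig hgrowth hcusp (by linarith) (by linarith)
          (fun t ↦ hB t y₀ ⟨min_le_right _ _, by linarith⟩) hge x
      _ = B * Real.exp 1 * S * Real.exp (2 * π * (y₀ + 1) + -(2 * π * y)) := by ring_nf
      _ ≤ _ := by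
        gcongr
        linarith

end PeriodicEigenfunction

namespace IsMaassCuspForm

variable {lam : ℂ} {φ : ℂ → ℂ}

lemma contDiffOn_two (hφ : IsMaassCuspForm lam φ) : ContDiffOn ℝ 2 φ upperHalfPlaneSet :=
  contDiffOn_infty.1 hφ.1 2

lemma add_one (hφ : IsMaassCuspForm lam φ) : ∀ z ∈ upperHalfPlaneSet, φ (z + 1) = φ z := by
  intro z hz
  simpa using hφ.2.1 ⟨!![1, 1; 0, 1], by simp⟩ z hz

lemma laplacian_eq (hφ : IsMaassCuspForm lam φ) :
    ∀ z ∈ upperHalfPlaneSet, -(z.im : ℂ) ^ 2 * Δ φ z = lam * (1 - lam) * φ z := by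
  intro z hz
  have hsmooth : ContDiffAt ℝ 2 φ z :=
    hφ.contDiffOn_two.contDiffAt (isOpen_upperHalfPlaneSet.mem_nhds hz)
  rw [laplacian_eq_dirDeriv_one_add_dirDeriv_I hsmooth, ← iteratedDeriv_two_comp_add_smul hsmooth,
    ← iteratedDeriv_two_comp_add_smul hsmooth]
  simpa only [Complex.real_smul, mul_one] using hφ.2.2.1 z hz

lemma isLittleO_exp (hφ : IsMaassCuspForm lam φ) {r : ℝ} (hr : 0 < r) :
    φ =o[comap Complex.im atTop] fun z ↦ Real.exp (r * z.im) := by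
  obtain ⟨A, C₀, -, -, hbound⟩ := hφ.2.2.2.1
  have hpoly : φ =O[comap Complex.im atTop] fun z ↦ z.im ^ A := by
    refine .of_bound C₀ ?_
    filter_upwards [preimage_mem_comap (Ioi_mem_atTop 1)] with z hz
    have hz' : 1 < z.im := hz
    rw [Real.norm_of_nonneg (by positivity)]
    simpa only [Complex.re_add_im] using hbound z.re z.im hz
  exact hpoly.trans_isLittleO ((isLittleO_rpow_exp_pos_mul_atTop A hr).comp_tendsto tendsto_comap)

lemma exists_norm_le_mul_exp (hφ : IsMaassCuspForm lam φ) {b : ℝ} (hb : 0 < b) :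
    ∃ K, 0 < K ∧ ∀ x y : ℝ, b ≤ y → ‖φ (x + y * I)‖ ≤ K * Real.exp (-(2 * π * y)) :=
  stmt_12_general hφ.contDiffOn_two hφ.add_one hφ.laplacian_eq (hφ.isLittleO_exp Real.two_pi_pos)
    hφ.2.2.2.2 hb

end IsMaassCuspForm

lemma exists_forall_le_mul_sqrt_log {a K : ℝ} (ha : 1 < a) (hK : 0 < K) :
    ∃ C, 0 < C ∧ ∀ y, a ≤ y → K ≤ C * √(Real.log y) := by
  have hlog : 0 < √(Real.log a) := Real.sqrt_pos.2 (Real.log_pos ha)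
  refine ⟨K / √(Real.log a), by positivity, fun y hy ↦ ?_⟩
  calc K = K / √(Real.log a) * √(Real.log a) := (div_mul_cancel₀ K hlog.ne').symm
    _ ≤ K / √(Real.log a) * √(Real.log y) := by gcongr

end

/-- every Maaß cusp form for `SL(2,ℤ)` satisfies
`|φ(x+iy)| ≤ C (log y)^{1/2} e^{-2πy}` for `y > 2` (Bernstein's method). -/
theorem stmt_12 (lam : ℂ) (φ : ℂ → ℂ) (hφ : IsMaassCuspForm lam φ) :
    ∃ C : ℝ, 0 < C ∧ ∀ x y : ℝ, 2 < y →
      ‖φ ((x : ℂ) + (y : ℂ) * Complex.I)‖ ≤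
        C * Real.sqrt (Real.log y) * Real.exp (-(2 * Real.pi * y)) := by
  obtain ⟨K, hK, hdecay⟩ := hφ.exists_norm_le_mul_exp two_pos
  obtain ⟨C, hC, hKC⟩ := exists_forall_le_mul_sqrt_log one_lt_two hK
  exact ⟨C, hC, fun x y hy ↦ (hdecay x y hy.le).trans (by gcongr; exact hKC y hy.le)⟩
end

section
/- Let n ≥ 2 and t = (t₁, …, t_{n−1}) ∈ ℝ^{n−1} with |t_j| < 1 for all j. Then for every g ∈ SL(n,ℝ) the real symmetric matrix Re(g·m(it)·m(it)ᵀ·gᵀ) is positive definite. In particular 𝒩⁺·x₀ ⊆ Ξ₀ and hence G·𝒩⁺·x₀ ⊆ Ξ₀ ⊆ Ξ, where 𝒩⁺ = {m(it) : |t_j| < 1 for all j}. -/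
open Matrix

/-!
Write `m(it) = 1 + iT` with `T` real and supported on the superdiagonal. Then
`Re (m(it) m(it)ᵀ) = 1 - T Tᵀ`, and `T Tᵀ` is diagonal with entries `t_j²` and a final `0`, so the
real part is positive definite as soon as all `|t_j| < 1`. Since taking real parts
is real linear, a real matrix `g` acts on them by the congruence `Re Z ↦ g (Re Z) gᵀ`, which
preserves positivity.
-/

section RealPart

variable {l m n : Type*} [Fintype m]

theorem map_re_ofReal_mul (A : Matrix l m ℝ) (Z : Matrix m n ℂ) :
    (A.map Complex.ofReal * Z).map Complex.re = A * Z.map Complex.re := by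
  ext i j
  simp [mul_apply]

theorem map_re_mul_ofReal (Z : Matrix l m ℂ) (B : Matrix m n ℝ) :
    (Z * B.map Complex.ofReal).map Complex.re = Z.map Complex.re * B := by
  ext i j
  simp [mul_apply]

theorem map_re_one_add_I_smul_mul_transpose [DecidableEq m] (T : Matrix m m ℝ) :
    ((1 + Complex.I • T.map Complex.ofReal) * (1 + Complex.I • T.map Complex.ofReal)ᵀ).map
      Complex.re = 1 - T * Tᵀ := by
  set S : Matrix m m ℂ := T.map Complex.ofReal with hS
  have expand : (1 + Complex.I • S) * (1 + Complex.I • S)ᵀ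
      = 1 - S * Sᵀ + Complex.I • (S + Sᵀ) := by
    simp only [transpose_add, transpose_one, transpose_smul, add_mul, mul_add, one_mul, mul_one,
      smul_mul_assoc, mul_smul_comm, smul_smul, Complex.I_mul_I, smul_add, neg_smul, one_smul]
    abel
  rw [expand]
  ext i j
  simp [hS, mul_apply, one_apply, apply_ite Complex.re]

end RealPart

section DetOneTube

/-- The domain `Ξ₀`: complex symmetric matrices of determinant one with positive definite real
part. -/
def detOneTube (ι : Type*) [Fintype ι] [DecidableEq ι] : Set (Matrix ι ι ℂ) :=
  {Z | (Z.map Complex.re).PosDef ∧ Z.IsSymm ∧ Z.det = 1}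

variable {ι : Type*} [Fintype ι] [DecidableEq ι]

theorem ofReal_mul_mul_transpose_mem_detOneTube {g : Matrix ι ι ℝ} (hg : g.det = 1)
    {Z : Matrix ι ι ℂ} (hZ : Z ∈ detOneTube ι) :
    g.map Complex.ofReal * Z * (g.map Complex.ofReal)ᵀ ∈ detOneTube ι := by
  obtain ⟨hpos, hsymm, hdet⟩ := hZ
  refine ⟨?_, ?_, ?_⟩
  · have hunit : IsUnit g := (isUnit_iff_isUnit_det g).2 (hg ▸ isUnit_one)
    rw [← transpose_map, map_re_mul_ofReal, map_re_ofReal_mul,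
      ← conjTranspose_eq_transpose_of_trivial]
    exact hpos.mul_mul_conjTranspose_same (vecMul_injective_of_isUnit hunit)
  · simp only [IsSymm, transpose_mul, transpose_transpose, hsymm.eq, Matrix.mul_assoc]
  · have hdetg : (g.map Complex.ofReal).det = 1 := by
      calc (g.map Complex.ofReal).det = (g.det : ℂ) := (Complex.ofRealHom.map_det g).symm
        _ = 1 := by rw [hg, Complex.ofReal_one]
    simp [hdet, hdetg]

end DetOneTube

section Superdiagonal

variable {n : ℕ} {R : Type*}

/-- The matrix with the entries of `a` directly above the diagonal and zeros elsewhere: `a j` is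
in row `j`. Weights are indexed by all rows, so the last one does not occur in the matrix. -/
def superdiagonal [Zero R] (a : Fin n → R) : Matrix (Fin n) (Fin n) R :=
  of fun j k => if (j : ℕ) + 1 = k then a j else 0

theorem superdiagonal_apply [Zero R] (a : Fin n → R) (j k : Fin n) :
    superdiagonal a j k = if (j : ℕ) + 1 = k then a j else 0 :=
  rfl

theorem superdiagonal_mul_transpose [NonUnitalNonAssocSemiring R] (a b : Fin n → R) :
    superdiagonal a * (superdiagonal b)ᵀ
      = diagonal fun j : Fin n => if (j : ℕ) + 1 < n then a j * b j else 0 := by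
  ext j k
  simp only [mul_apply, transpose_apply, superdiagonal_apply, diagonal_apply]
  by_cases hj : (j : ℕ) + 1 < n
  · rw [Finset.sum_eq_single (⟨j + 1, hj⟩ : Fin n)]
    · rcases eq_or_ne j k with rfl | hjk
      · simp [hj]
      · simp [hjk, Fin.val_inj, hjk.symm]
    · intro l _ hl
      have : (j : ℕ) + 1 ≠ l := fun h => hl (Fin.ext h.symm)
      simp [this]
    · simp
  · have (l : Fin n) : (j : ℕ) + 1 ≠ l := by omega
    simp [this, hj]

theorem det_one_add_superdiagonal [CommRing R] (a : Fin n → R) :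
    (1 + superdiagonal a).det = 1 := by
  have upper : (1 + superdiagonal a).IsUpperTriangular := by
    intro i j (hij : j < i)
    have : (i : ℕ) + 1 ≠ j := by omega
    simp [superdiagonal_apply, hij.ne', this]
  simp [det_of_isUpperTriangular upper, superdiagonal_apply]

theorem posDef_one_sub_superdiagonal_mul_transpose {a : Fin n → ℝ}
    (ha : ∀ j : Fin n, (j : ℕ) + 1 < n → |a j| < 1) :
    (1 - superdiagonal a * (superdiagonal a)ᵀ).PosDef := by
  rw [superdiagonal_mul_transpose, ← diagonal_one, diagonal_sub]
  refine PosDef.diagonal fun j => sub_pos.2 ?_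
  split_ifs with hj
  · simpa [sq] using (sq_lt_one_iff_abs_lt_one (a j)).2 (ha j hj)
  · exact one_pos

theorem I_smul_superdiagonal_ofReal (a : Fin n → ℝ) :
    Complex.I • (superdiagonal a).map Complex.ofReal
      = superdiagonal fun j => Complex.I * (a j : ℂ) := by
  ext j k
  simp [superdiagonal_apply, apply_ite Complex.ofReal]

theorem one_add_superdiagonal_I_mul_transpose_mem_detOneTube {a : Fin n → ℝ}
    (ha : ∀ j : Fin n, (j : ℕ) + 1 < n → |a j| < 1) :
    (1 + superdiagonal fun j => Complex.I * (a j : ℂ))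
      * (1 + superdiagonal fun j => Complex.I * (a j : ℂ))ᵀ ∈ detOneTube (Fin n) := by
  refine ⟨?_, isSymm_mul_transpose_self _, ?_⟩
  · rw [← I_smul_superdiagonal_ofReal, map_re_one_add_I_smul_mul_transpose]
    exact posDef_one_sub_superdiagonal_mul_transpose ha
  · rw [det_mul, det_transpose, det_one_add_superdiagonal, one_mul]

end Superdiagonal

/-- for `n ≥ 2` and `t ∈ ℝ^{n-1}` with all `|t_j| < 1`, and every
`g ∈ SL(n,ℝ)`, the real symmetric matrix `Re(g·m(it)·m(it)ᵀ·gᵀ)` is positive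
definite; in particular `g·m(it)·m(it)ᵀ·gᵀ` lies in the determinant-one tube cut
`Ξ₀ = {Z symmetric, det Z = 1, Re Z ≫ 0}` of `X_ℂ`, i.e. `G·𝒩⁺·x₀ ⊆ Ξ₀ ⊆ Ξ`. -/
theorem stmt_13 (n : ℕ) (hn : 2 ≤ n) (t : Fin (n - 1) → ℝ) (ht : ∀ j, |t j| < 1)
    (g : Matrix (Fin n) (Fin n) ℝ) (hg : g.det = 1) :
    let tt : Fin n → ℝ := fun j => if h : (j : ℕ) < n - 1 then t ⟨j, h⟩ else 0
    let M : Matrix (Fin n) (Fin n) ℂ :=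
      1 + Matrix.of (fun j k : Fin n =>
        if (j : ℕ) + 1 = (k : ℕ) then Complex.I * (tt j : ℂ) else 0)
    let gc : Matrix (Fin n) (Fin n) ℂ := g.map (fun x : ℝ => (x : ℂ))
    let W : Matrix (Fin n) (Fin n) ℂ := gc * M * Mᵀ * gcᵀ
    (W.map Complex.re).PosDef ∧ W.IsSymm ∧ W.det = 1 := by
  intro tt M gc W
  have htt (j : Fin n) (hj : (j : ℕ) + 1 < n) : |tt j| < 1 := by
    simpa only [tt, dif_pos (show (j : ℕ) < n - 1 by omega)] using ht _
  have hM : M * Mᵀ ∈ detOneTube (Fin n) :=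
    one_add_superdiagonal_I_mul_transpose_mem_detOneTube htt
  have hW : W = gc * (M * Mᵀ) * gcᵀ := by simp only [W, Matrix.mul_assoc]
  rw [hW]
  exact ofReal_mul_mul_transpose_mem_detOneTube hg hM
end

section
/- For every t = (t₁, …, t_n) ∈ ℝⁿ with |t_j| < π/4 for all j, one has the coset identity Sp(2n,ℝ)·n_t·K_ℂ = Sp(2n,ℝ)·a_t·K_ℂ as subsets of Sp(2n,ℂ), where n_t is the block matrix [[I_n, i·diag(sin 2t₁, …, sin 2t_n)], [0, I_n]] and a_t = diag(e^{it₁}, …, e^{it_n}, e^{−it₁}, …, e^{−it_n}). -/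
open Matrix

/-- The standard symplectic form matrix `J = [[0, I],[−I, 0]]` (over `ℂ`),
with respect to the index set `Fin n ⊕ Fin n`. -/
noncomputable def Jmat (n : ℕ) : Matrix (Fin n ⊕ Fin n) (Fin n ⊕ Fin n) ℂ :=
  Matrix.fromBlocks 0 1 (-1) 0

/-- The complex symplectic group `Sp(2n,ℂ) = {g : gᵀJg = J}`. -/
noncomputable def SpC (n : ℕ) : Set (Matrix (Fin n ⊕ Fin n) (Fin n ⊕ Fin n) ℂ) :=
  {g | gᵀ * Jmat n * g = Jmat n}

/-- The real symplectic group `Sp(2n,ℝ)`, viewed as the real-entried matrices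
in `Sp(2n,ℂ)`. -/
noncomputable def SpR (n : ℕ) : Set (Matrix (Fin n ⊕ Fin n) (Fin n ⊕ Fin n) ℂ) :=
  {g | g ∈ SpC n ∧ ∀ i j, (g i j).im = 0}

/-- `K_ℂ = {k ∈ Sp(2n,ℂ) : kᵀk = 1}`, the complexified maximal compact subgroup. -/
noncomputable def KC (n : ℕ) : Set (Matrix (Fin n ⊕ Fin n) (Fin n ⊕ Fin n) ℂ) :=
  {k | k ∈ SpC n ∧ kᵀ * k = 1}

/-- `a_t = diag(e^{it₁},…,e^{itₙ},e^{-it₁},…,e^{-itₙ})`. -/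
noncomputable def aMat (n : ℕ) (t : Fin n → ℝ) :
    Matrix (Fin n ⊕ Fin n) (Fin n ⊕ Fin n) ℂ :=
  Matrix.fromBlocks (Matrix.diagonal fun j => Complex.exp (Complex.I * (t j : ℂ))) 0 0
    (Matrix.diagonal fun j => Complex.exp (-(Complex.I * (t j : ℂ))))

/-- `u_s = [[I, i·diag(s₁,…,sₙ)],[0, I]]`. -/
noncomputable def uMat (n : ℕ) (s : Fin n → ℝ) :
    Matrix (Fin n ⊕ Fin n) (Fin n ⊕ Fin n) ℂ :=
  Matrix.fromBlocks 1 (Matrix.diagonal fun j => Complex.I * (s j : ℂ)) 0 1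

/-!
Under the embedding of `SL(2)ⁿ` into `Sp(2n)` by block matrices with diagonal blocks, everything
reduces to `n = 1`, where one has to find a real Möbius transformation taking `a_t · i = i e^{2it}`
to `n_t · i = i (1 + sin 2t)`, because `K_ℂ` is the stabilizer of `i`. The Cayley map
`z ↦ (z - 1) / (z + 1)` sends the unit circle to the imaginary axis and `i e^{2it}` to
`i (1 + sin 2t) / cos 2t`; rescaling by `cos 2t` is realized by a real matrix of determinant one
exactly when `cos 2t > 0`.
-/

open DoubleCoset
open scoped MatrixGroups

lemma image_doubleCoset {F M N : Type*} [Mul M] [Mul N] [FunLike F M N] [MulHomClass F M N]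
    (f : F) (a : M) (s t : Set M) :
    f '' doubleCoset a s t = doubleCoset (f a) (f '' s) (f '' t) := by
  simp only [doubleCoset, Set.image_mul, Set.image_singleton]

section Symplectic

variable {l R S : Type*} [DecidableEq l] [Fintype l] [CommRing R] [CommRing S]

lemma map_mem_symplecticGroup_iff {f : R →+* S} (hf : Function.Injective f)
    {A : Matrix (l ⊕ l) (l ⊕ l) R} : A.map f ∈ symplecticGroup l S ↔ A ∈ symplecticGroup l R := by
  refine ⟨fun hA => ?_, fun hA => SymplecticGroup.map_mem hA f⟩
  rw [SymplecticGroup.mem_iff, ← map_J l f, ← transpose_map, ← Matrix.map_mul,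
    ← Matrix.map_mul] at hA
  exact SymplecticGroup.mem_iff.mpr (Matrix.map_injective hf hA)

/-- The homomorphism of symplectic groups induced by a ring homomorphism; for `ℝ →+* ℂ` its range
is `Sp(2n,ℝ)` inside `Sp(2n,ℂ)`. -/
def symplecticMap (f : R →+* S) : symplecticGroup l R →* symplecticGroup l S where
  toFun A := ⟨(A : Matrix (l ⊕ l) (l ⊕ l) R).map f, SymplecticGroup.map_mem A.2 f⟩
  map_one' := Subtype.ext (map_one f.mapMatrix)
  map_mul' A B := Subtype.ext (map_mul f.mapMatrix A.1 B.1)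

variable (l R) in
/-- The subgroup of orthogonal matrices in the symplectic group; orthogonality is with respect to
the transpose, so that over `ℂ` this is `K_ℂ` and not the compact group `Sp(2n,ℂ) ∩ U(2n)`. -/
def symplecticOrthogonal : Subgroup (symplecticGroup l R) where
  toSubmonoid := (orthogonalGroup (l ⊕ l) R).comap (symplecticGroup l R).subtype
  inv_mem' {k} hk := by
    have hleft : k.1ᵀ * k.1 = 1 := (mem_orthogonalGroup_iff' _ _).mp hk
    change (k⁻¹).1 ∈ orthogonalGroup (l ⊕ l) R
    rw [SymplecticGroup.coe_inv', inv_eq_left_inv hleft, mem_orthogonalGroup_iff,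
      transpose_transpose, hleft]

lemma mem_symplecticOrthogonal {k : symplecticGroup l R} :
    k ∈ symplecticOrthogonal l R ↔ (k : Matrix (l ⊕ l) (l ⊕ l) R)ᵀ * k = 1 :=
  mem_orthogonalGroup_iff' _ _

lemma fromBlocks_diagonal_mem_symplecticGroup (M : l → SL(2, R)) :
    fromBlocks (diagonal fun j => M j 0 0) (diagonal fun j => M j 0 1)
      (diagonal fun j => M j 1 0) (diagonal fun j => M j 1 1) ∈ symplecticGroup l R := by
  have hdet (j : l) : M j 0 0 * M j 1 1 - M j 1 0 * M j 0 1 = 1 := by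
    rw [mul_comm (M j 1 0), ← det_fin_two, (M j).det_coe]
  simp only [SymplecticGroup.fromBlocks_mem_iff, diagonal_transpose, diagonal_mul_diagonal,
    diagonal_sub, hdet, diagonal_one]
  exact ⟨by simp only [mul_comm], by simp only [mul_comm], trivial⟩

/-- The embedding of `SL(2)^l` into `Sp(2l)` whose `j`-th factor acts on the `j`-th hyperbolic
plane of the standard symplectic basis. -/
def slTwoEmbedding : (l → SL(2, R)) →* symplecticGroup l R where
  toFun M := ⟨_, fromBlocks_diagonal_mem_symplecticGroup M⟩
  map_one' := Subtype.ext <| by simp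
  map_mul' M N := Subtype.ext <| by
    simp [fromBlocks_multiply, diagonal_add, Matrix.mul_apply, Fin.sum_univ_two]

lemma coe_slTwoEmbedding (M : l → SL(2, R)) :
    (slTwoEmbedding M : Matrix (l ⊕ l) (l ⊕ l) R) =
      fromBlocks (diagonal fun j => M j 0 0) (diagonal fun j => M j 0 1)
        (diagonal fun j => M j 1 0) (diagonal fun j => M j 1 1) :=
  rfl

lemma slTwoEmbedding_map (f : R →+* S) (M : l → SL(2, R)) :
    slTwoEmbedding (fun j => (M j).map f) = symplecticMap f (slTwoEmbedding M) := by
  refine Subtype.ext ?_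
  simp [symplecticMap, coe_slTwoEmbedding, fromBlocks_map, diagonal_map]

lemma slTwoEmbedding_transpose (M : l → SL(2, R)) :
    (slTwoEmbedding fun j => (M j).transpose : Matrix (l ⊕ l) (l ⊕ l) R) =
      (slTwoEmbedding M : Matrix (l ⊕ l) (l ⊕ l) R)ᵀ := by
  simp [coe_slTwoEmbedding, fromBlocks_transpose]

lemma slTwoEmbedding_mem_symplecticOrthogonal {M : l → SL(2, R)}
    (hM : ∀ j, (M j).transpose * M j = 1) : slTwoEmbedding M ∈ symplecticOrthogonal l R := by
  rw [mem_symplecticOrthogonal, ← slTwoEmbedding_transpose, ← Submonoid.coe_mul, ← map_mul]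
  have hone : (fun j => (M j).transpose) * M = 1 := funext hM
  rw [hone, map_one, Submonoid.coe_one]

end Symplectic

section SLTwo

variable {R S F : Type*} [CommRing R] [CommRing S] [Field F]

/-- The matrix of the scaled Cayley map `z ↦ c (z - 1) / (z + 1)`, normalized by `w` to have
determinant one. -/
def scaledCayley (w c : R) (h : w ^ 2 * (2 * c) = 1) : SL(2, R) :=
  ⟨!![w * c, -(w * c); w, w], by rw [det_fin_two_of]; linear_combination h⟩

lemma coe_scaledCayley {w c : R} (h : w ^ 2 * (2 * c) = 1) :
    (scaledCayley w c h : Matrix (Fin 2) (Fin 2) R) = !![w * c, -(w * c); w, w] :=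
  rfl

lemma map_scaledCayley (f : R →+* S) {w c : R} (h : w ^ 2 * (2 * c) = 1) :
    (scaledCayley w c h).map f =
      scaledCayley (f w) (f c) (by
        simpa only [map_mul, map_pow, map_ofNat, map_one] using congrArg f h) := by
  refine Subtype.ext ?_
  simp [SpecialLinearGroup.map_apply_coe, coe_scaledCayley, ← Matrix.ext_iff]

/-- The elements of `SO(2, R)`, which fix `i` as Möbius transformations. -/
def planeRotation (x y : R) (h : x ^ 2 + y ^ 2 = 1) : SL(2, R) :=
  ⟨!![x, y; -y, x], by rw [det_fin_two_of]; linear_combination h⟩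

lemma coe_planeRotation {x y : R} (h : x ^ 2 + y ^ 2 = 1) :
    (planeRotation x y h : Matrix (Fin 2) (Fin 2) R) = !![x, y; -y, x] :=
  rfl

lemma transpose_planeRotation_mul_self {x y : R} (h : x ^ 2 + y ^ 2 = 1) :
    (planeRotation x y h).transpose * planeRotation x y h = 1 := by
  ext i j
  rw [Matrix.SpecialLinearGroup.coe_mul, Matrix.SpecialLinearGroup.coe_transpose,
    Matrix.SpecialLinearGroup.coe_one, coe_planeRotation, one_fin_two]
  fin_cases i <;> fin_cases j <;>
    simp only [Fin.zero_eta, Fin.mk_one, Matrix.mul_apply, Fin.sum_univ_two, transpose_apply,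
      of_apply, cons_val]
  · linear_combination h
  · ring
  · ring
  · linear_combination h

lemma coe_transvection_zero_one (b : R) :
    (SpecialLinearGroup.transvection (zero_ne_one : (0 : Fin 2) ≠ 1) b : Matrix (Fin 2) (Fin 2) R) =
      !![1, b; 0, 1] := by
  ext i j
  fin_cases i <;> fin_cases j <;> simp [SpecialLinearGroup.transvection_coe]

lemma transvection_eq_scaledCayley_mul_diag2_mul_planeRotation {e w c : F} (he : e ≠ 0)
    (hc : 2 * c = e ^ 2 + e⁻¹ ^ 2) (hw : w ^ 2 * (2 * c) = 1) :
    SpecialLinearGroup.transvection zero_ne_one (e ^ 2 - c) =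
      scaledCayley w c hw * SpecialLinearGroup.diag2 e he *
        planeRotation (w * e⁻¹) (w * e) (by linear_combination hw - w ^ 2 * hc) := by
  have hinv : e * e⁻¹ = 1 := mul_inv_cancel₀ he
  ext i j
  rw [Matrix.SpecialLinearGroup.coe_mul, Matrix.SpecialLinearGroup.coe_mul,
    coe_transvection_zero_one, coe_scaledCayley, SpecialLinearGroup.diag2_coe', coe_planeRotation,
    mul_fin_two, mul_fin_two]
  fin_cases i <;> fin_cases j <;> simp only [Fin.zero_eta, Fin.mk_one, of_apply, cons_val]
  · linear_combination -hw - 2 * w ^ 2 * c * hinv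
  · linear_combination -(e ^ 2 - c) * hw - w ^ 2 * c * hc
  · ring
  · linear_combination -hw + w ^ 2 * hc

end SLTwo

lemma mem_SpC_iff {n : ℕ} {g : Matrix (Fin n ⊕ Fin n) (Fin n ⊕ Fin n) ℂ} :
    g ∈ SpC n ↔ g ∈ symplecticGroup (Fin n) ℂ := by
  have hJ : Jmat n = -J (Fin n) ℂ := by simp [Jmat, J, fromBlocks_neg]
  rw [SymplecticGroup.mem_iff']
  simp [SpC, hJ]

lemma SpR_eq_image (n : ℕ) :
    SpR n = (symplecticGroup (Fin n) ℂ).subtype ''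
      ((symplecticMap Complex.ofRealHom).range : Subgroup (symplecticGroup (Fin n) ℂ)) := by
  ext g
  constructor
  · rintro ⟨hg, him⟩
    have hre : (g.map Complex.re).map Complex.ofRealHom = g := by
      ext i j
      exact Complex.conj_eq_iff_re.mp (Complex.conj_eq_iff_im.mpr (him i j))
    have hmem : g.map Complex.re ∈ symplecticGroup (Fin n) ℝ := by
      rw [← map_mem_symplecticGroup_iff (f := Complex.ofRealHom) Complex.ofReal_injective, hre]
      exact mem_SpC_iff.mp hg
    exact ⟨_, ⟨⟨_, hmem⟩, rfl⟩, hre⟩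
  · rintro ⟨_, ⟨A, rfl⟩, rfl⟩
    exact ⟨mem_SpC_iff.mpr (symplecticMap Complex.ofRealHom A).2, fun i j => Complex.ofReal_im _⟩

lemma KC_eq_image (n : ℕ) :
    KC n = (symplecticGroup (Fin n) ℂ).subtype '' symplecticOrthogonal (Fin n) ℂ := by
  ext k
  constructor
  · rintro ⟨hk, hkk⟩
    exact ⟨⟨k, mem_SpC_iff.mp hk⟩, mem_symplecticOrthogonal.mpr hkk, rfl⟩
  · rintro ⟨k, hkk, rfl⟩
    exact ⟨mem_SpC_iff.mpr k.2, mem_symplecticOrthogonal.mp hkk⟩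

lemma uMat_eq_slTwoEmbedding (n : ℕ) (s : Fin n → ℝ) :
    uMat n s = slTwoEmbedding fun j =>
      SpecialLinearGroup.transvection zero_ne_one (Complex.I * (s j : ℂ)) := by
  simp [uMat, coe_slTwoEmbedding, coe_transvection_zero_one]

lemma aMat_eq_slTwoEmbedding (n : ℕ) (t : Fin n → ℝ) :
    aMat n t = slTwoEmbedding fun j =>
      SpecialLinearGroup.diag2 (Complex.exp (Complex.I * (t j : ℂ))) (Complex.exp_ne_zero _) := by
  simp [aMat, coe_slTwoEmbedding, SpecialLinearGroup.diag2_coe', Complex.exp_neg]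

lemma exists_transvection_eq_map_mul_diag2_mul {t : ℝ} (ht : 0 < Real.cos (2 * t)) :
    ∃ (g : SL(2, ℝ)) (k : SL(2, ℂ)), k.transpose * k = 1 ∧
      SpecialLinearGroup.transvection zero_ne_one (Complex.I * (Real.sin (2 * t) : ℂ)) =
        g.map Complex.ofRealHom *
          SpecialLinearGroup.diag2 (Complex.exp (Complex.I * t)) (Complex.exp_ne_zero _) * k := by
  set e : ℂ := Complex.exp (Complex.I * t)
  set w : ℝ := (√(2 * Real.cos (2 * t)))⁻¹
  have hsq : e ^ 2 = Real.cos (2 * t) + Real.sin (2 * t) * Complex.I := by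
    rw [← Complex.exp_nat_mul, Complex.ofReal_cos, Complex.ofReal_sin, ← Complex.exp_mul_I]
    push_cast
    ring_nf
  have hinvsq : e⁻¹ ^ 2 = Real.cos (2 * t) - Real.sin (2 * t) * Complex.I := by
    rw [← Complex.exp_neg, ← Complex.exp_nat_mul, Complex.ofReal_cos, Complex.ofReal_sin,
      Complex.cos_sub_sin_I]
    push_cast
    ring_nf
  have hw : w ^ 2 * (2 * Real.cos (2 * t)) = 1 := by
    rw [inv_pow, Real.sq_sqrt (by positivity), inv_mul_cancel₀ (by positivity)]
  have hc : 2 * (Real.cos (2 * t) : ℂ) = e ^ 2 + e⁻¹ ^ 2 := by rw [hsq, hinvsq]; ring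
  have hs : Complex.I * (Real.sin (2 * t) : ℂ) = e ^ 2 - Real.cos (2 * t) := by rw [hsq]; ring
  have hwC : (w : ℂ) ^ 2 * (2 * Real.cos (2 * t)) = 1 := mod_cast hw
  refine ⟨scaledCayley _ _ hw,
    planeRotation (w * e⁻¹) (w * e) (by linear_combination hwC - (w : ℂ) ^ 2 * hc),
    transpose_planeRotation_mul_self _, ?_⟩
  rw [map_scaledCayley, hs]
  exact transvection_eq_scaledCayley_mul_diag2_mul_planeRotation _ hc hwC

lemma slTwoEmbedding_transvection_mem_doubleCoset {l : Type*} [DecidableEq l] [Fintype l]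
    {t : l → ℝ} (ht : ∀ j, 0 < Real.cos (2 * t j)) :
    slTwoEmbedding (fun j =>
        SpecialLinearGroup.transvection zero_ne_one (Complex.I * (Real.sin (2 * t j) : ℂ))) ∈
      doubleCoset
        (slTwoEmbedding fun j =>
          SpecialLinearGroup.diag2 (Complex.exp (Complex.I * (t j : ℂ))) (Complex.exp_ne_zero _))
        ((symplecticMap Complex.ofRealHom).range : Subgroup (symplecticGroup l ℂ))
        (symplecticOrthogonal l ℂ) := by
  choose g k hk hfactor using fun j => exists_transvection_eq_map_mul_diag2_mul (ht j)
  refine mem_doubleCoset.mpr ⟨slTwoEmbedding fun j => (g j).map Complex.ofRealHom,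
    ⟨slTwoEmbedding g, (slTwoEmbedding_map _ g).symm⟩, slTwoEmbedding k,
    slTwoEmbedding_mem_symplecticOrthogonal hk, ?_⟩
  rw [← map_mul, ← map_mul]
  exact congrArg slTwoEmbedding (funext hfactor)

theorem stmt_14_general (n : ℕ) (t : Fin n → ℝ) (ht : ∀ j, 0 < Real.cos (2 * t j)) :
    {m : Matrix (Fin n ⊕ Fin n) (Fin n ⊕ Fin n) ℂ | ∃ g ∈ SpR n, ∃ k ∈ KC n,
        m = g * uMat n (fun j => Real.sin (2 * t j)) * k} =
    {m : Matrix (Fin n ⊕ Fin n) (Fin n ⊕ Fin n) ℂ | ∃ g ∈ SpR n, ∃ k ∈ KC n,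
        m = g * aMat n t * k} := by
  simp only [← mem_doubleCoset, Set.ofPred_mem_eq]
  rw [SpR_eq_image, KC_eq_image, uMat_eq_slTwoEmbedding, aMat_eq_slTwoEmbedding]
  simp only [← Submonoid.subtype_apply, ← image_doubleCoset]
  rw [doubleCoset_eq_of_mem (slTwoEmbedding_transvection_mem_doubleCoset ht)]

/-- for `t ∈ ℝⁿ` with all `|t_j| < π/4`, one has the coset identity
`Sp(2n,ℝ)·n_t·K_ℂ = Sp(2n,ℝ)·a_t·K_ℂ` in `Sp(2n,ℂ)`, where
`n_t = [[I, i·diag(sin 2t_j)],[0, I]]`. -/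
theorem stmt_14 (n : ℕ) (t : Fin n → ℝ) (ht : ∀ j, |t j| < Real.pi / 4) :
    {m : Matrix (Fin n ⊕ Fin n) (Fin n ⊕ Fin n) ℂ | ∃ g ∈ SpR n, ∃ k ∈ KC n,
        m = g * uMat n (fun j => Real.sin (2 * t j)) * k} =
    {m : Matrix (Fin n ⊕ Fin n) (Fin n ⊕ Fin n) ℂ | ∃ g ∈ SpR n, ∃ k ∈ KC n,
        m = g * aMat n t * k} := by
  refine stmt_14_general n t fun j => Real.cos_pos_of_mem_Ioo ?_
  constructor <;> linarith [abs_lt.mp (ht j)]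
end

section
/- For all real numbers x and z the following are equivalent: (a) for all real u, v, w one has (1 + (u + ix)² + v²)² + (w + i(z + 2xv))² ≠ 0 (an equation between complex numbers, i denoting the imaginary unit); (b) 2x² + |z| < 1. -/
/-!
Factor `A² + B² = (A + iB)(A - iB)` with `A = 1 + (u + ix)² + v²` and `B = w + i(z + 2xv)`.
The second factor is the first one at `(-z, -v, -w)`. The first factor has real part
`u² + (v - x)² + (1 - 2x² - z)`, and its imaginary part `2xu + w` can be cancelled by the choice
of `w`; so it has a zero exactly when `1 ≤ 2x² + z`. Both factors are zero-free exactly when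
`2x² ± z < 1`.
-/

open Complex

/-- The factor `A + iB` of `A² + B²`, where `A = 1 + (u + ix)² + v²` and `B = w + i(z + 2xv)`.
The factor `A - iB` gets no definition of its own, being `sumSqFactor x (-z) u (-v) (-w)`. -/
noncomputable def sumSqFactor (x z u v w : ℝ) : ℂ :=
  1 + ((u : ℂ) + x * I) ^ 2 + (v : ℂ) ^ 2 + (w + (z + 2 * x * v) * I) * I

namespace sumSqFactor

variable (x z u v w : ℝ)

theorem mul_neg_eq_sq_add_sq :
    sumSqFactor x z u v w * sumSqFactor x (-z) u (-v) (-w) =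
      (1 + ((u : ℂ) + x * I) ^ 2 + (v : ℂ) ^ 2) ^ 2 + (w + (z + 2 * x * v) * I) ^ 2 := by
  simp only [sumSqFactor]
  push_cast
  linear_combination -((w : ℂ) + (z + 2 * x * v) * I) ^ 2 * I_sq

theorem re_eq : (sumSqFactor x z u v w).re = u ^ 2 + (v - x) ^ 2 + (1 - 2 * x ^ 2 - z) := by
  simp only [sumSqFactor, pow_two, add_re, add_im, mul_re, mul_im, one_re, I_re, I_im, ofReal_re,
    ofReal_im, re_ofNat, im_ofNat]
  ring

theorem im_eq : (sumSqFactor x z u v w).im = 2 * x * u + w := by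
  simp only [sumSqFactor, pow_two, add_re, add_im, mul_re, mul_im, one_im, I_re, I_im, ofReal_re,
    ofReal_im, re_ofNat, im_ofNat]
  ring

variable {x z}

theorem ne_zero_of_lt_one (h : 2 * x ^ 2 + z < 1) : sumSqFactor x z u v w ≠ 0 := by
  have re_pos : 0 < (sumSqFactor x z u v w).re := by
    rw [re_eq]
    have : 0 < 1 - 2 * x ^ 2 - z := by linarith
    positivity
  intro h_zero
  rw [h_zero, zero_re] at re_pos
  exact re_pos.false

theorem exists_eq_zero_of_one_le (h : 1 ≤ 2 * x ^ 2 + z) :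
    ∃ u v w : ℝ, sumSqFactor x z u v w = 0 := by
  have sq_root : √(2 * x ^ 2 + z - 1) ^ 2 = 2 * x ^ 2 + z - 1 := Real.sq_sqrt (by linarith)
  refine ⟨√(2 * x ^ 2 + z - 1), x, -(2 * x * √(2 * x ^ 2 + z - 1)), Complex.ext ?_ ?_⟩
  · rw [re_eq, sq_root, zero_re]
    ring
  · rw [im_eq, zero_im]
    ring

theorem forall_ne_zero_iff :
    (∀ u v w : ℝ, sumSqFactor x z u v w ≠ 0) ↔ 2 * x ^ 2 + z < 1 := by
  refine ⟨fun h_ne ↦ ?_, fun h u v w ↦ ne_zero_of_lt_one u v w h⟩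
  by_contra! h
  obtain ⟨u, v, w, h_zero⟩ := exists_eq_zero_of_one_le h
  exact h_ne u v w h_zero

theorem forall_neg_ne_zero_iff :
    (∀ u v w : ℝ, sumSqFactor x (-z) u (-v) (-w) ≠ 0) ↔ 2 * x ^ 2 - z < 1 := by
  rw [sub_eq_add_neg, ← forall_ne_zero_iff]
  exact ⟨fun h u v w ↦ by simpa only [neg_neg] using h u (-v) (-w), fun h u v w ↦ h u (-v) (-w)⟩

end sumSqFactor

/-- For all real `x`, `z`, the nonvanishing condition
`(1 + (u + ix)² + v²)² + (w + i(z + 2xv))² ≠ 0` for all real `u, v, w`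
is equivalent to `2x² + |z| < 1`. -/
theorem stmt_16 (x z : ℝ) :
    (∀ u v w : ℝ,
      (1 + ((u : ℂ) + (x : ℂ) * Complex.I) ^ 2 + (v : ℂ) ^ 2) ^ 2 +
        ((w : ℂ) + ((z : ℂ) + 2 * (x : ℂ) * (v : ℂ)) * Complex.I) ^ 2 ≠ 0) ↔
    2 * x ^ 2 + |z| < 1 := by
  have abs_bound_iff : 2 * x ^ 2 + |z| < 1 ↔ 2 * x ^ 2 + z < 1 ∧ 2 * x ^ 2 - z < 1 := by
    rw [← lt_sub_iff_add_lt', abs_lt]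
    constructor <;> rintro ⟨_, _⟩ <;> constructor <;> linarith
  simp only [← sumSqFactor.mul_neg_eq_sq_add_sq, mul_ne_zero_iff, forall_and]
  rw [sumSqFactor.forall_ne_zero_iff, sumSqFactor.forall_neg_ne_zero_iff, abs_bound_iff]
end

section
/- Let n ≥ 2, let k = (k₁, …, k_n) ∈ ℝⁿ be a unit vector, and let 0 ≤ t < 1. Set ζ = 1 − t²·(k₁² + ⋯ + k_{n−1}²) + 2it·(k₁k₂ + k₂k₃ + ⋯ + k_{n−1}k_n) ∈ ℂ. Then ζ ≠ 0 and |arg ζ| ≤ arctan(2t/(1 − t²)). -/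
/-!
Truncating the unit vector `k` at either end gives two vectors of the unit ball, and the imaginary
part of `ζ` is `2t` times their inner product, so Cauchy–Schwarz gives `|Im ζ| ≤ 2t`. The real part
is at least `1 - t² > 0`. Hence `ζ` lies in the right half-plane, where `arg` is the arctangent of
the slope `Im ζ / Re ζ`.
-/

theorem arg_eq_arctan_of_re_pos {z : ℂ} (hz : 0 < z.re) :
    Complex.arg z = Real.arctan (z.im / z.re) := by
  obtain ⟨h_lower, h_upper⟩ :=
    abs_lt.mp (Complex.abs_arg_lt_pi_div_two_iff.mpr (Or.inl hz))
  rw [← Complex.tan_arg, Real.arctan_tan h_lower h_upper]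

theorem abs_arctan_le_arctan {x y : ℝ} (hxy : |x| ≤ y) :
    |Real.arctan x| ≤ Real.arctan y := by
  obtain ⟨h_lower, h_upper⟩ := abs_le.mp hxy
  rw [abs_le, ← Real.arctan_neg]
  exact ⟨Real.arctan_mono h_lower, Real.arctan_mono h_upper⟩

theorem abs_arg_le_arctan_div {z : ℂ} {a b : ℝ} (ha : 0 < a) (hre : a ≤ z.re)
    (him : |z.im| ≤ b) : |Complex.arg z| ≤ Real.arctan (b / a) := by
  have hz : 0 < z.re := ha.trans_le hre
  have h_slope : |z.im / z.re| ≤ b / a := by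
    rw [abs_div, abs_of_pos hz]
    exact div_le_div₀ ((abs_nonneg _).trans him) him ha hre
  rw [arg_eq_arctan_of_re_pos hz]
  exact abs_arctan_le_arctan h_slope

theorem abs_sum_mul_le_one {ι : Type*} {s : Finset ι} {x y : ι → ℝ}
    (hx : ∑ j ∈ s, x j ^ 2 ≤ 1) (hy : ∑ j ∈ s, y j ^ 2 ≤ 1) :
    |∑ j ∈ s, x j * y j| ≤ 1 := by
  rw [← sq_le_one_iff_abs_le_one]
  calc (∑ j ∈ s, x j * y j) ^ 2
      ≤ (∑ j ∈ s, x j ^ 2) * ∑ j ∈ s, y j ^ 2 := Finset.sum_mul_sq_le_sq_mul_sq s x y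
    _ ≤ 1 := mul_le_one₀ hx (Finset.sum_nonneg fun j _ => sq_nonneg (y j)) hy

section OrderedSums

variable {M : Type*} [AddCommMonoid M] [PartialOrder M] [IsOrderedAddMonoid M] {m : ℕ}

theorem sum_castSucc_le_sum {f : Fin (m + 1) → M} (hf : 0 ≤ f (Fin.last m)) :
    ∑ j : Fin m, f j.castSucc ≤ ∑ j, f j := by
  rw [Fin.sum_univ_castSucc]
  exact le_add_of_nonneg_right hf

theorem sum_succ_le_sum {f : Fin (m + 1) → M} (hf : 0 ≤ f 0) :
    ∑ j : Fin m, f j.succ ≤ ∑ j, f j := by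
  rw [Fin.sum_univ_succ]
  exact le_add_of_nonneg_left hf

end OrderedSums

theorem stmt_17_general {ι : Type*} (s : Finset ι) (x y : ι → ℝ)
    (hx : ∑ j ∈ s, x j ^ 2 ≤ 1) (hy : ∑ j ∈ s, y j ^ 2 ≤ 1) (t : ℝ) (ht : |t| < 1) :
    let S1 : ℝ := ∑ j ∈ s, x j ^ 2
    let S2 : ℝ := ∑ j ∈ s, x j * y j
    let ζ : ℂ := 1 - (t : ℂ) ^ 2 * (S1 : ℂ) + 2 * Complex.I * (t : ℂ) * (S2 : ℂ)
    ζ ≠ 0 ∧ |Complex.arg ζ| ≤ Real.arctan (2 * |t| / (1 - t ^ 2)) := by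
  intro S1 S2 ζ
  have h_re : ζ.re = 1 - t ^ 2 * S1 := by simp [ζ, ← Complex.ofReal_pow]
  have h_im : ζ.im = 2 * t * S2 := by simp [ζ, ← Complex.ofReal_pow]
  have h_pos : 0 < 1 - t ^ 2 := sub_pos.mpr ((sq_lt_one_iff_abs_lt_one t).mpr ht)
  have h_re_ge : 1 - t ^ 2 ≤ ζ.re := by
    rw [h_re]
    exact sub_le_sub_left (mul_le_of_le_one_right (sq_nonneg t) hx) 1
  have h_im_le : |ζ.im| ≤ 2 * |t| := by
    rw [h_im, abs_mul, abs_mul, abs_two]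
    exact mul_le_of_le_one_right (by positivity) (abs_sum_mul_le_one hx hy)
  have h_ne : ζ ≠ 0 := Complex.ne_zero_of_re_pos (h_pos.trans_le h_re_ge)
  exact ⟨h_ne, abs_arg_le_arctan_div h_pos h_re_ge h_im_le⟩

/-- let `k ∈ ℝⁿ` (`n ≥ 2`) be a unit vector and `0 ≤ t < 1`. Set
`ζ = 1 − t²(k₁² + ⋯ + k_{n−1}²) + 2it(k₁k₂ + ⋯ + k_{n−1}k_n)`. Then `ζ ≠ 0` and
`|arg ζ| ≤ arctan(2t/(1 − t²))`. -/
theorem stmt_17 (n : ℕ) (hn : 2 ≤ n) (k : Fin n → ℝ)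
    (hk : ∑ j, k j ^ 2 = 1) (t : ℝ) (ht0 : 0 ≤ t) (ht1 : t < 1) :
    let S1 : ℝ := ∑ j : Fin (n - 1), k (Fin.castLE (Nat.sub_le n 1) j) ^ 2
    let S2 : ℝ := ∑ j : Fin (n - 1), k (Fin.castLE (Nat.sub_le n 1) j) *
        k ⟨(j : ℕ) + 1, by have := j.isLt; omega⟩
    let ζ : ℂ := 1 - (t : ℂ) ^ 2 * (S1 : ℂ) + 2 * Complex.I * (t : ℂ) * (S2 : ℂ)
    ζ ≠ 0 ∧ |Complex.arg ζ| ≤ Real.arctan (2 * t / (1 - t ^ 2)) := by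
  obtain ⟨m, rfl⟩ : ∃ m, n = m + 1 := ⟨n - 1, by omega⟩
  have h_init : ∑ j : Fin m, k j.castSucc ^ 2 ≤ 1 :=
    hk ▸ sum_castSucc_le_sum (f := fun j => k j ^ 2) (sq_nonneg _)
  have h_tail : ∑ j : Fin m, k j.succ ^ 2 ≤ 1 :=
    hk ▸ sum_succ_le_sum (f := fun j => k j ^ 2) (sq_nonneg _)
  have h_abs : |t| = t := abs_of_nonneg ht0
  have h := stmt_17_general Finset.univ _ _ h_init h_tail t (h_abs.trans_lt ht1)
  rwa [h_abs] at h
end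

section
/- Let p ≥ 1 and c > 0. The connected component containing 0 of the set {Y ∈ ℝᵖ : for all Y′ ∈ ℝᵖ, 1 + c(‖Y′‖² − ‖Y‖²) − 2ic⟨Y, Y′⟩ ≠ 0} (a nonvanishing condition on a complex number, i the imaginary unit) is exactly the open ball {Y ∈ ℝᵖ : c‖Y‖² < 1}. -/
open scoped RealInnerProductSpace

/-!
The real part of `1 + c (‖Y'‖² - ‖Y‖²) - 2 i c ⟪Y, Y'⟫` is at least `1 - c ‖Y‖²`, so the number
never vanishes on the convex set `c ‖Y‖² < 1`. On the sphere `c ‖Y‖² = 1` it vanishes at `Y' = 0`,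
so by the intermediate value theorem no connected set of admissible `Y` containing `0` can leave
the ball.
-/

theorem connectedComponentIn_eq_setOf_lt {X α : Type*} [TopologicalSpace X] [LinearOrder α]
    [TopologicalSpace α] [OrderClosedTopology α] {S : Set X} {f : X → α} {a : α} {x : X}
    (hf : ContinuousOn f S) (hconn : IsPreconnected {y | f y < a}) (hsub : {y | f y < a} ⊆ S)
    (hne : ∀ y ∈ S, f y ≠ a) (hx : f x < a) :
    connectedComponentIn S x = {y | f y < a} := by
  have hcomp : connectedComponentIn S x ⊆ S := connectedComponentIn_subset S x
  refine Set.Subset.antisymm (fun y hy ↦ ?_) (hconn.subset_connectedComponentIn hx hsub)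
  by_contra hay
  obtain ⟨z, hz, hza⟩ := isPreconnected_connectedComponentIn.intermediate_value
    (mem_connectedComponentIn (hsub hx)) hy (hf.mono hcomp) ⟨hx.le, not_lt.mp hay⟩
  exact hne z (hcomp hz) hza

section IwasawaFactor

variable {E : Type*} [SeminormedAddCommGroup E] [InnerProductSpace ℝ E] {c : ℝ}

/-- The function `1 + c ⟨Y' + iY, Y' + iY⟩` whose nonvanishing is the Iwasawa criterion for the
crown, with `⟨·,·⟩` extended complex bilinearly and expanded into real and imaginary parts. The
imaginary part carries the opposite sign, that is, `Y'` is replaced by `-Y'`; as the criterion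
quantifies over all `Y'`, this does not affect it. -/
noncomputable def iwasawaFactor (c : ℝ) (Y Y' : E) : ℂ :=
  ((1 + c * (‖Y'‖ ^ 2 - ‖Y‖ ^ 2) : ℝ) : ℂ) - 2 * (c : ℂ) * ((⟪Y, Y'⟫ : ℝ) : ℂ) * Complex.I

theorem iwasawaFactor_re (c : ℝ) (Y Y' : E) :
    (iwasawaFactor c Y Y').re = 1 + c * (‖Y'‖ ^ 2 - ‖Y‖ ^ 2) := by
  rw [iwasawaFactor, Complex.sub_re, Complex.ofReal_re]
  simp

theorem iwasawaFactor_zero_right (c : ℝ) (Y : E) :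
    iwasawaFactor c Y 0 = ((1 - c * ‖Y‖ ^ 2 : ℝ) : ℂ) := by
  simp [iwasawaFactor, sub_eq_add_neg]

theorem iwasawaFactor_ne_zero (hc : 0 ≤ c) {Y : E} (hY : c * ‖Y‖ ^ 2 < 1) (Y' : E) :
    iwasawaFactor c Y Y' ≠ 0 := by
  have hre : 0 < (iwasawaFactor c Y Y').re := calc
    0 < 1 - c * ‖Y‖ ^ 2 := sub_pos.mpr hY
    _ ≤ 1 - c * ‖Y‖ ^ 2 + c * ‖Y'‖ ^ 2 := le_add_of_nonneg_right (by positivity)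
    _ = (iwasawaFactor c Y Y').re := by rw [iwasawaFactor_re]; ring
  exact fun h ↦ hre.ne' (by rw [h, Complex.zero_re])

theorem mul_norm_sq_ne_one_of_iwasawaFactor_ne_zero {Y : E} (hY : iwasawaFactor c Y 0 ≠ 0) :
    c * ‖Y‖ ^ 2 ≠ 1 := by
  rw [iwasawaFactor_zero_right, Complex.ofReal_ne_zero, sub_ne_zero] at hY
  exact hY.symm

theorem convex_setOf_mul_norm_sq_lt (hc : 0 ≤ c) (r : ℝ) :
    Convex ℝ {Y : E | c * ‖Y‖ ^ 2 < r} := by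
  have hconv : ConvexOn ℝ Set.univ (fun Y : E ↦ c * ‖Y‖ ^ 2) :=
    (convexOn_univ_norm.pow (fun Y _ ↦ norm_nonneg Y) 2).smul hc
  simpa using hconv.convex_lt r

theorem stmt_18_general (hc : 0 ≤ c) :
    connectedComponentIn {Y : E | ∀ Y' : E, iwasawaFactor c Y Y' ≠ 0} 0 =
      {Y : E | c * ‖Y‖ ^ 2 < 1} :=
  connectedComponentIn_eq_setOf_lt (by fun_prop)
    (convex_setOf_mul_norm_sq_lt hc 1).isPreconnected
    (fun _ hY ↦ iwasawaFactor_ne_zero hc hY)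
    (fun _ hY ↦ mul_norm_sq_ne_one_of_iwasawaFactor_ne_zero (hY 0))
    (by simp)

end IwasawaFactor

/-- for `p ≥ 1` and `c > 0`, the connected component containing `0` of
`{Y ∈ ℝᵖ : ∀ Y', 1 + c(‖Y'‖² − ‖Y‖²) − 2ic⟪Y,Y'⟫ ≠ 0}` is exactly the open ball
`{Y : c‖Y‖² < 1}`. -/
theorem stmt_18 (p : ℕ) (hp : 1 ≤ p) (c : ℝ) (hc : 0 < c) :
    connectedComponentIn
      {Y : EuclideanSpace ℝ (Fin p) | ∀ Y' : EuclideanSpace ℝ (Fin p),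
        ((1 + c * (‖Y'‖ ^ 2 - ‖Y‖ ^ 2) : ℝ) : ℂ) -
          2 * (c : ℂ) * ((⟪Y, Y'⟫ : ℝ) : ℂ) * Complex.I ≠ 0}
      0 =
    {Y : EuclideanSpace ℝ (Fin p) | c * ‖Y‖ ^ 2 < 1} :=
  stmt_18_general hc.le
end

section
/- For every real symmetric n×n matrix Z, the following are equivalent: (a) both I_n + Z and I_n − Z are positive definite — equivalently, the pair (i(I_n + Z), −i(I_n − Z)) lies in X × X̄; (b) the operator norm of Z satisfies ‖Z‖ < 1. Hence (Theorem on the symplectic group, part (i)) Λ⁺ = {Z̃ : Z ∈ Sym(n,ℝ), ‖Z‖ < 1}. -/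
open Matrix

/-!
For self-adjoint `a`, the continuous functional calculus reads both sides off the spectrum: `r ± a`
is strictly positive iff `r ± x > 0` for every `x ∈ spectrum ℝ a`, and `‖a‖ < r` iff `|x| < r` for
every such `x`. For matrices, strict positivity is positive definiteness.
-/

section StrictPositivity

variable {A : Type*} [TopologicalSpace A] [Ring A] [StarRing A] [PartialOrder A]
  [StarOrderedRing A] [Algebra ℝ A] [ContinuousFunctionalCalculus ℝ A IsSelfAdjoint]
  [NonnegSpectrumClass ℝ A] {a : A}

theorem isStrictlyPositive_algebraMap_add_iff (r : ℝ) (ha : IsSelfAdjoint a) :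
    IsStrictlyPositive (algebraMap ℝ A r + a) ↔ ∀ x ∈ spectrum ℝ a, -r < x := by
  have cfc_shift : cfc (fun x ↦ r + x) a = algebraMap ℝ A r + a := by
    rw [cfc_const_add r (fun x ↦ x) a, cfc_id' ℝ a]
  simp only [← cfc_shift, cfc_isStrictlyPositive_iff (fun x ↦ r + x) a, neg_lt_iff_pos_add']

theorem isStrictlyPositive_algebraMap_sub_iff (r : ℝ) (ha : IsSelfAdjoint a) :
    IsStrictlyPositive (algebraMap ℝ A r - a) ↔ ∀ x ∈ spectrum ℝ a, x < r := by
  rw [sub_eq_add_neg, isStrictlyPositive_algebraMap_add_iff r ha.neg, ← spectrum.neg_eq,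
    neg_surjective.forall]
  simp only [Set.neg_mem_neg, neg_lt_neg_iff]

end StrictPositivity

section IsometricFunctionalCalculus

variable {A : Type*} [NormedRing A] [StarRing A] [NormedAlgebra ℝ A]
  [IsometricContinuousFunctionalCalculus ℝ A IsSelfAdjoint] {a : A} {r : ℝ}

theorem norm_lt_iff_forall_mem_spectrum_abs_lt (ha : IsSelfAdjoint a) (hr : 0 < r) :
    ‖a‖ < r ↔ ∀ x ∈ spectrum ℝ a, |x| < r := by
  simpa only [cfc_id ℝ a, id_eq, Real.norm_eq_abs] using norm_cfc_lt_iff (id : ℝ → ℝ) a hr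

theorem isStrictlyPositive_algebraMap_add_and_sub_iff_norm_lt [PartialOrder A] [StarOrderedRing A]
    [NonnegSpectrumClass ℝ A] (ha : IsSelfAdjoint a) (hr : 0 < r) :
    IsStrictlyPositive (algebraMap ℝ A r + a) ∧ IsStrictlyPositive (algebraMap ℝ A r - a) ↔
      ‖a‖ < r := by
  simp only [isStrictlyPositive_algebraMap_add_iff r ha, isStrictlyPositive_algebraMap_sub_iff r ha,
    norm_lt_iff_forall_mem_spectrum_abs_lt ha hr, abs_lt, ← forall₂_and]

end IsometricFunctionalCalculus

open scoped ComplexOrder MatrixOrder Matrix.Norms.L2Operator in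
theorem stmt_19_general {𝕜 ι : Type*} [RCLike 𝕜] [Fintype ι] [DecidableEq ι]
    {Z : Matrix ι ι 𝕜} (hZ : Z.IsHermitian) {r : ℝ} (hr : 0 < r) :
    (r • (1 : Matrix ι ι 𝕜) + Z).PosDef ∧ (r • (1 : Matrix ι ι 𝕜) - Z).PosDef ↔
      ‖toEuclideanCLM (n := ι) (𝕜 := 𝕜) Z‖ < r := by
  let _ : NormedAlgebra ℝ (Matrix ι ι 𝕜) :=
    { norm_smul_le c M := by
        rw [RCLike.real_smul_eq_coe_smul (K := 𝕜), norm_smul, RCLike.norm_ofReal,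
          Real.norm_eq_abs] }
  rw [← isStrictlyPositive_iff_posDef, ← isStrictlyPositive_iff_posDef,
    ← Algebra.algebraMap_eq_smul_one, ← cstar_norm_def]
  exact isStrictlyPositive_algebraMap_add_and_sub_iff_norm_lt hZ.isSelfAdjoint hr

/-- for a real symmetric `n×n` matrix `Z`, both `I + Z` and `I − Z` are
positive definite (equivalently `(i(I+Z), −i(I−Z)) ∈ X × X̄`) if and only if the
operator norm of `Z` on Euclidean `ℝⁿ` is `< 1`.  Hence
`Λ⁺ = {Z̃ : Z ∈ Sym(n,ℝ), ‖Z‖ < 1}`. -/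
theorem stmt_19 (n : ℕ) (Z : Matrix (Fin n) (Fin n) ℝ) (hZ : Z.IsSymm) :
    (((1 : Matrix (Fin n) (Fin n) ℝ) + Z).PosDef ∧
      ((1 : Matrix (Fin n) (Fin n) ℝ) - Z).PosDef) ↔
    ‖(Matrix.toEuclideanCLM (𝕜 := ℝ) Z :
        EuclideanSpace ℝ (Fin n) →L[ℝ] EuclideanSpace ℝ (Fin n))‖ < 1 := by
  simpa only [one_smul] using stmt_19_general (isHermitian_iff_isSymm.mpr hZ) one_pos
end
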